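/- arXiv:2211.14754 — 4 statements merged into one kernel-verified Lean document; each statement's English description precedes it below -/
import Mathlib

section
/- Let (A,Δ_A,ε_A) and (B,Δ_B,ε_B) be counital coassociative k-coalgebras and let τ : B⊗A → A⊗B be a bijective k-linear map. Then (A⊗B, Δ_{A⊗_τ B}, ε_{A⊗_τ B}) is a counital coassociative k-coalgebra if and only if both of the following hold: (i) (ε_A⊗1_B)∘τ = (canonical isomorphism B⊗k ≅ k⊗B)∘(1_B⊗ε_A) and (1_A⊗ε_B)∘τ = (canonical isomorphism k⊗A ≅ A⊗k)∘(ε_B⊗1_A); (ii) (Δ_A⊗Δ_B)∘τ = (1_A⊗τ⊗1_B)∘(τ⊗τ)∘(1_B⊗τ⊗1_A)∘(Δ_B⊗Δ_A). -/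
open scoped TensorProduct

namespace TTP

section Defs

variable (k : Type*) [Field k]

section MidMap

variable {X P Q Y R S : Type*}
  [AddCommGroup X] [Module k X] [AddCommGroup P] [Module k P]
  [AddCommGroup Q] [Module k Q] [AddCommGroup Y] [Module k Y]
  [AddCommGroup R] [Module k R] [AddCommGroup S] [Module k S]

/-- The map `1_X ⊗ f ⊗ 1_Y` (with the canonical reassociations). -/
noncomputable def midMap (f : P ⊗[k] Q →ₗ[k] R ⊗[k] S) :
    (X ⊗[k] P) ⊗[k] (Q ⊗[k] Y) →ₗ[k] (X ⊗[k] R) ⊗[k] (S ⊗[k] Y) :=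
  (TensorProduct.assoc k (X ⊗[k] R) S Y).toLinearMap
    ∘ₗ TensorProduct.map (TensorProduct.assoc k X R S).symm.toLinearMap LinearMap.id
    ∘ₗ TensorProduct.map (TensorProduct.map LinearMap.id f) LinearMap.id
    ∘ₗ TensorProduct.map (TensorProduct.assoc k X P Q).toLinearMap LinearMap.id
    ∘ₗ (TensorProduct.assoc k (X ⊗[k] P) Q Y).symm.toLinearMap

end MidMap

variable {A B : Type*} [AddCommGroup A] [Module k A] [AddCommGroup B] [Module k B]

/-- `(A, mul, unit)` is a unital associative `k`-algebra (diagrammatically). -/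
def IsUnitalAssoc (mul : A ⊗[k] A →ₗ[k] A) (unit : k →ₗ[k] A) : Prop :=
  mul ∘ₗ TensorProduct.map unit LinearMap.id ∘ₗ (TensorProduct.lid k A).symm.toLinearMap
      = LinearMap.id
  ∧ mul ∘ₗ TensorProduct.map LinearMap.id unit ∘ₗ (TensorProduct.rid k A).symm.toLinearMap
      = LinearMap.id
  ∧ mul ∘ₗ TensorProduct.map mul LinearMap.id
      = mul ∘ₗ TensorProduct.map LinearMap.id mul ∘ₗ (TensorProduct.assoc k A A A).toLinearMap

/-- `(A, comul, counit)` is a counital coassociative `k`-coalgebra (diagrammatically). -/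
def IsCounitalCoassoc (comul : A →ₗ[k] A ⊗[k] A) (counit : A →ₗ[k] k) : Prop :=
  (TensorProduct.lid k A).toLinearMap ∘ₗ TensorProduct.map counit LinearMap.id ∘ₗ comul
      = LinearMap.id
  ∧ (TensorProduct.rid k A).toLinearMap ∘ₗ TensorProduct.map LinearMap.id counit ∘ₗ comul
      = LinearMap.id
  ∧ TensorProduct.map comul LinearMap.id ∘ₗ comul
      = (TensorProduct.assoc k A A A).symm.toLinearMap
          ∘ₗ TensorProduct.map LinearMap.id comul ∘ₗ comul

/-- `τ : B ⊗ A → A ⊗ B` is a twisting map for the algebras `A` and `B`: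
it is compatible with both units and with both multiplications. -/
def IsTwisting (mulA : A ⊗[k] A →ₗ[k] A) (unitA : k →ₗ[k] A)
    (mulB : B ⊗[k] B →ₗ[k] B) (unitB : k →ₗ[k] B)
    (τ : B ⊗[k] A →ₗ[k] A ⊗[k] B) : Prop :=
  τ ∘ₗ TensorProduct.map LinearMap.id unitA
      = TensorProduct.map unitA LinearMap.id ∘ₗ (TensorProduct.comm k B k).toLinearMap
  ∧ τ ∘ₗ TensorProduct.map unitB LinearMap.id
      = TensorProduct.map LinearMap.id unitB ∘ₗ (TensorProduct.comm k k A).toLinearMap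
  ∧ τ ∘ₗ TensorProduct.map mulB mulA
      = TensorProduct.map mulA mulB ∘ₗ midMap k τ ∘ₗ TensorProduct.map τ τ ∘ₗ midMap k τ

/-- The multiplication `(∇_A ⊗ ∇_B) ∘ (1 ⊗ τ ⊗ 1)` of the twisted tensor product. -/
noncomputable def tMul (mulA : A ⊗[k] A →ₗ[k] A) (mulB : B ⊗[k] B →ₗ[k] B)
    (τ : B ⊗[k] A →ₗ[k] A ⊗[k] B) :
    (A ⊗[k] B) ⊗[k] (A ⊗[k] B) →ₗ[k] A ⊗[k] B :=
  TensorProduct.map mulA mulB ∘ₗ midMap k τ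

/-- The unit `(η_A ⊗ η_B) ∘ (k ≅ k ⊗ k)` of the twisted tensor product. -/
noncomputable def tUnit (unitA : k →ₗ[k] A) (unitB : k →ₗ[k] B) : k →ₗ[k] A ⊗[k] B :=
  TensorProduct.map unitA unitB ∘ₗ (TensorProduct.lid k k).symm.toLinearMap

/-- The comultiplication `(1 ⊗ τ⁻¹ ⊗ 1) ∘ (Δ_A ⊗ Δ_B)` of the twisted tensor product. -/
noncomputable def tComul (comulA : A →ₗ[k] A ⊗[k] A) (comulB : B →ₗ[k] B ⊗[k] B)
    (τinv : A ⊗[k] B →ₗ[k] B ⊗[k] A) :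
    A ⊗[k] B →ₗ[k] (A ⊗[k] B) ⊗[k] (A ⊗[k] B) :=
  midMap k τinv ∘ₗ TensorProduct.map comulA comulB

/-- The counit `(k ⊗ k ≅ k) ∘ (ε_A ⊗ ε_B)` of the twisted tensor product. -/
noncomputable def tCounit (counitA : A →ₗ[k] k) (counitB : B →ₗ[k] k) :
    A ⊗[k] B →ₗ[k] k :=
  (TensorProduct.lid k k).toLinearMap ∘ₗ TensorProduct.map counitA counitB

/-- Compatibility of `τ` with the counits (diagram (5) of the paper). -/
def CounitCompat (counitA : A →ₗ[k] k) (counitB : B →ₗ[k] k)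
    (τ : B ⊗[k] A →ₗ[k] A ⊗[k] B) : Prop :=
  TensorProduct.map counitA LinearMap.id ∘ₗ τ
      = (TensorProduct.comm k B k).toLinearMap ∘ₗ TensorProduct.map LinearMap.id counitA
  ∧ TensorProduct.map LinearMap.id counitB ∘ₗ τ
      = (TensorProduct.comm k k A).toLinearMap ∘ₗ TensorProduct.map counitB LinearMap.id

/-- Compatibility of `τ` with the comultiplications (diagram (6) of the paper):
`(Δ_A ⊗ Δ_B)∘τ = (1⊗τ⊗1)∘(τ⊗τ)∘(1⊗τ⊗1)∘(Δ_B ⊗ Δ_A)`. -/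
def ComulCompat (comulA : A →ₗ[k] A ⊗[k] A) (comulB : B →ₗ[k] B ⊗[k] B)
    (τ : B ⊗[k] A →ₗ[k] A ⊗[k] B) : Prop :=
  TensorProduct.map comulA comulB ∘ₗ τ
      = midMap k τ ∘ₗ TensorProduct.map τ τ ∘ₗ midMap k τ ∘ₗ TensorProduct.map comulB comulA

/-- `(f ⊗ 1_B) ∘ τ = (1_A ⊗ τ) ∘ (τ ⊗ 1_A) ∘ (1_B ⊗ f)` for `f : A → A ⊗ A`. -/
def MidACompat (f : A →ₗ[k] A ⊗[k] A) (τ : B ⊗[k] A →ₗ[k] A ⊗[k] B) : Prop :=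
  TensorProduct.map f LinearMap.id ∘ₗ τ
    = (TensorProduct.assoc k A A B).symm.toLinearMap
      ∘ₗ TensorProduct.map LinearMap.id τ
      ∘ₗ (TensorProduct.assoc k A B A).toLinearMap
      ∘ₗ TensorProduct.map τ LinearMap.id
      ∘ₗ (TensorProduct.assoc k B A A).symm.toLinearMap
      ∘ₗ TensorProduct.map LinearMap.id f

/-- `(1_A ⊗ g) ∘ τ = (τ ⊗ 1_B) ∘ (1_B ⊗ τ) ∘ (g ⊗ 1_A)` for `g : B → B ⊗ B`. -/
def MidBCompat (g : B →ₗ[k] B ⊗[k] B) (τ : B ⊗[k] A →ₗ[k] A ⊗[k] B) : Prop :=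
  TensorProduct.map LinearMap.id g ∘ₗ τ
    = (TensorProduct.assoc k A B B).toLinearMap
      ∘ₗ TensorProduct.map τ LinearMap.id
      ∘ₗ (TensorProduct.assoc k B A B).symm.toLinearMap
      ∘ₗ TensorProduct.map LinearMap.id τ
      ∘ₗ (TensorProduct.assoc k B B A).toLinearMap
      ∘ₗ TensorProduct.map g LinearMap.id

/-- `(A, mul, unit, comul, counit)` is a Frobenius algebra (diagrammatically). -/
def IsFrobenius (mul : A ⊗[k] A →ₗ[k] A) (unit : k →ₗ[k] A)
    (comul : A →ₗ[k] A ⊗[k] A) (counit : A →ₗ[k] k) : Prop :=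
  IsUnitalAssoc k mul unit
  ∧ IsCounitalCoassoc k comul counit
  ∧ comul ∘ₗ mul
      = TensorProduct.map LinearMap.id mul ∘ₗ (TensorProduct.assoc k A A A).toLinearMap
          ∘ₗ TensorProduct.map comul LinearMap.id
  ∧ comul ∘ₗ mul
      = TensorProduct.map mul LinearMap.id ∘ₗ (TensorProduct.assoc k A A A).symm.toLinearMap
          ∘ₗ TensorProduct.map LinearMap.id comul

/-- `(A, mul, unit, comul, counit)` is a bialgebra (diagrammatically). -/
def IsBialgebra (mul : A ⊗[k] A →ₗ[k] A) (unit : k →ₗ[k] A)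
    (comul : A →ₗ[k] A ⊗[k] A) (counit : A →ₗ[k] k) : Prop :=
  IsUnitalAssoc k mul unit
  ∧ IsCounitalCoassoc k comul counit
  ∧ counit ∘ₗ mul = (TensorProduct.lid k k).toLinearMap ∘ₗ TensorProduct.map counit counit
  ∧ comul ∘ₗ unit = TensorProduct.map unit unit ∘ₗ (TensorProduct.lid k k).symm.toLinearMap
  ∧ counit ∘ₗ unit = LinearMap.id
  ∧ comul ∘ₗ mul
      = TensorProduct.map mul mul ∘ₗ midMap k (TensorProduct.comm k A A).toLinearMap
          ∘ₗ TensorProduct.map comul comul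

/-- `(A, mul, unit, comul, counit)` is a Hopf algebra: a bialgebra with an antipode. -/
def IsHopf (mul : A ⊗[k] A →ₗ[k] A) (unit : k →ₗ[k] A)
    (comul : A →ₗ[k] A ⊗[k] A) (counit : A →ₗ[k] k) : Prop :=
  IsBialgebra k mul unit comul counit
  ∧ ∃ S : A →ₗ[k] A,
      mul ∘ₗ TensorProduct.map S LinearMap.id ∘ₗ comul = unit ∘ₗ counit
      ∧ mul ∘ₗ TensorProduct.map LinearMap.id S ∘ₗ comul = unit ∘ₗ counit

/-- `Γ` is a right inverse of the multiplication which is a bimodule morphism,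
witnessing separability of the algebra. -/
def IsSeparableWith (mul : A ⊗[k] A →ₗ[k] A) (Γ : A →ₗ[k] A ⊗[k] A) : Prop :=
  mul ∘ₗ Γ = LinearMap.id
  ∧ Γ ∘ₗ mul ∘ₗ TensorProduct.map LinearMap.id mul
      = TensorProduct.map mul mul
          ∘ₗ (TensorProduct.assoc k A A (A ⊗[k] A)).symm.toLinearMap
          ∘ₗ TensorProduct.map LinearMap.id (TensorProduct.assoc k A A A).toLinearMap
          ∘ₗ TensorProduct.map LinearMap.id (TensorProduct.map Γ LinearMap.id)

/-- The pairing `β` is associative: `β∘(1⊗∇) = β∘(∇⊗1)`. -/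
def PairingAssoc (mul : A ⊗[k] A →ₗ[k] A) (β : A ⊗[k] A →ₗ[k] k) : Prop :=
  β ∘ₗ TensorProduct.map LinearMap.id mul ∘ₗ (TensorProduct.assoc k A A A).toLinearMap
    = β ∘ₗ TensorProduct.map mul LinearMap.id

/-- The pairing `β` is non-degenerate with co-pairing `α`:
`(1⊗β)∘(α⊗1) = 1_A` under the canonical isomorphisms. -/
def PairingNondeg (β : A ⊗[k] A →ₗ[k] k) (α : k →ₗ[k] A ⊗[k] A) : Prop :=
  (TensorProduct.rid k A).toLinearMap
      ∘ₗ TensorProduct.map LinearMap.id β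
      ∘ₗ (TensorProduct.assoc k A A A).toLinearMap
      ∘ₗ TensorProduct.map α LinearMap.id
      ∘ₗ (TensorProduct.lid k A).symm.toLinearMap = LinearMap.id

/-- The pairing `β` is symmetric: `β ∘ σ = β` for the flip `σ`. -/
def PairingSymm (β : A ⊗[k] A →ₗ[k] k) : Prop :=
  β ∘ₗ (TensorProduct.comm k A A).toLinearMap = β

end Defs

end TTP

namespace TTP

section Aux
open TensorProduct LinearMap

variable {k : Type*} [Field k]
variable {A B M N P Q R S X Y : Type*}
  [AddCommGroup A] [Module k A] [AddCommGroup B] [Module k B]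
  [AddCommGroup M] [Module k M] [AddCommGroup N] [Module k N]
  [AddCommGroup P] [Module k P] [AddCommGroup Q] [Module k Q]
  [AddCommGroup R] [Module k R] [AddCommGroup S] [Module k S]
  [AddCommGroup X] [Module k X] [AddCommGroup Y] [Module k Y]

/-- A two-to-two operation acting at the head of a right-nested word. -/
noncomputable def opS (X : Type*) [AddCommGroup X] [Module k X]
    (f : P ⊗[k] Q →ₗ[k] R ⊗[k] S) : P ⊗[k] (Q ⊗[k] X) →ₗ[k] R ⊗[k] (S ⊗[k] X) :=
  (TensorProduct.assoc k R S X).toLinearMap ∘ₗ rTensor X f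
    ∘ₗ (TensorProduct.assoc k P Q X).symm.toLinearMap

/-- A one-to-two operation acting at the head of a right-nested word. -/
noncomputable def opD (X : Type*) [AddCommGroup X] [Module k X]
    (f : M →ₗ[k] R ⊗[k] S) : M ⊗[k] X →ₗ[k] R ⊗[k] (S ⊗[k] X) :=
  (TensorProduct.assoc k R S X).toLinearMap ∘ₗ rTensor X f

/-- A one-to-zero operation acting at the head of a right-nested word. -/
noncomputable def opE (X : Type*) [AddCommGroup X] [Module k X]
    (f : M →ₗ[k] k) : M ⊗[k] X →ₗ[k] X :=
  (TensorProduct.lid k X).toLinearMap ∘ₗ rTensor X f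

theorem opS_tmul (f : P ⊗[k] Q →ₗ[k] R ⊗[k] S) (p : P) (q : Q) (x : X) :
    opS X f (p ⊗ₜ (q ⊗ₜ x)) = TensorProduct.assoc k R S X (f (p ⊗ₜ q) ⊗ₜ x) := by
  simp [opS]

theorem opD_tmul (f : M →ₗ[k] R ⊗[k] S) (m : M) (x : X) :
    opD X f (m ⊗ₜ x) = TensorProduct.assoc k R S X (f m ⊗ₜ x) := by
  simp [opD]

theorem opE_tmul (f : M →ₗ[k] k) (m : M) (x : X) :
    opE X f (m ⊗ₜ x) = f m • x := by
  simp [opE]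

theorem assoc_nat (u : R ⊗[k] S) (x : X) (g : X →ₗ[k] Y) :
    TensorProduct.assoc k R S Y (u ⊗ₜ g x)
      = lTensor R (lTensor S g) (TensorProduct.assoc k R S X (u ⊗ₜ x)) := by
  induction u with
  | zero => simp
  | tmul a b => simp
  | add a b ha hb => simp only [add_tmul, map_add, ha, hb]

theorem opS_nat (f : P ⊗[k] Q →ₗ[k] R ⊗[k] S) (g : X →ₗ[k] Y) (z : P ⊗[k] (Q ⊗[k] X)) :
    opS Y f (lTensor P (lTensor Q g) z) = lTensor R (lTensor S g) (opS X f z) := by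
  suffices h : opS Y f ∘ₗ (lTensor P (lTensor Q g)) = lTensor R (lTensor S g) ∘ₗ (opS X f) from
    LinearMap.congr_fun h z
  ext p q x
  simp [opS_tmul, assoc_nat]

theorem opD_nat (f : M →ₗ[k] R ⊗[k] S) (g : X →ₗ[k] Y) (z : M ⊗[k] X) :
    opD Y f (lTensor M g z) = lTensor R (lTensor S g) (opD X f z) := by
  suffices h : opD Y f ∘ₗ (lTensor M g) = lTensor R (lTensor S g) ∘ₗ (opD X f) from
    LinearMap.congr_fun h z
  ext m x
  simp [opD_tmul, assoc_nat]

theorem opE_nat (f : M →ₗ[k] k) (g : X →ₗ[k] Y) (z : M ⊗[k] X) :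
    opE Y f (lTensor M g z) = g (opE X f z) := by
  suffices h : opE Y f ∘ₗ (lTensor M g) = g ∘ₗ (opE X f) from
    LinearMap.congr_fun h z
  ext m x
  simp [opE_tmul]

/-- Cancel the trailing factor. -/
theorem eq_of_rTensor {f g : M →ₗ[k] N} (h : ∀ z, rTensor k f z = rTensor k g z) : f = g := by
  ext m
  have := congrArg (TensorProduct.rid k N) (h (m ⊗ₜ 1))
  simpa using this

/-! Applying pointwise identities under a whiskering. -/

theorem und21 {f : N →ₗ[k] P} {g : M →ₗ[k] N} {h : M →ₗ[k] P}
    (H : ∀ x, f (g x) = h x) (z : X ⊗[k] M) :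
    lTensor X f (lTensor X g z) = lTensor X h z := by
  rw [← LinearMap.comp_apply, ← lTensor_comp]
  congr 2
  ext x; exact H x

theorem und20 {f : N →ₗ[k] M} {g : M →ₗ[k] N}
    (H : ∀ x, f (g x) = x) (z : X ⊗[k] M) :
    lTensor X f (lTensor X g z) = z := by
  rw [und21 (h := LinearMap.id) H]; simp

theorem und22 {f : N →ₗ[k] P} {g : M →ₗ[k] N} {h : Q →ₗ[k] P} {i : M →ₗ[k] Q}
    (H : ∀ x, f (g x) = h (i x)) (z : X ⊗[k] M) :
    lTensor X f (lTensor X g z) = lTensor X h (lTensor X i z) := by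
  rw [und21 (h := h ∘ₗ i) H, lTensor_comp, LinearMap.comp_apply]

theorem und23 {f : N →ₗ[k] P} {g : M →ₗ[k] N} {h : Q →ₗ[k] P} {i : R →ₗ[k] Q}
    {j : M →ₗ[k] R} (H : ∀ x, f (g x) = h (i (j x))) (z : X ⊗[k] M) :
    lTensor X f (lTensor X g z) = lTensor X h (lTensor X i (lTensor X j z)) := by
  rw [und21 (h := h ∘ₗ i ∘ₗ j) H, lTensor_comp, lTensor_comp, LinearMap.comp_apply,
    LinearMap.comp_apply]

/-! Translation of coalgebra axioms. -/

theorem tr_assoc3 (comul : M →ₗ[k] M ⊗[k] M) (u : M ⊗[k] M) (x : X) :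
    lTensor M (TensorProduct.assoc k M M X).toLinearMap (TensorProduct.assoc k M (M ⊗[k] M) X
      (lTensor M comul u ⊗ₜ x)) =
    lTensor M (opD X comul) (TensorProduct.assoc k M M X (u ⊗ₜ x)) := by
  induction u with
  | zero => simp
  | tmul a b => simp [opD_tmul]
  | add a b ha hb => simp only [add_tmul, map_add, ha, hb]

theorem tr_assoc3' (comul : M →ₗ[k] M ⊗[k] M) (u : M ⊗[k] M) (x : X) :
    TensorProduct.assoc k M M (M ⊗[k] X) (TensorProduct.assoc k (M ⊗[k] M) M X
      (rTensor M comul u ⊗ₜ x)) =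
    opD (M ⊗[k] X) comul (TensorProduct.assoc k M M X (u ⊗ₜ x)) := by
  induction u with
  | zero => simp
  | tmul a b => simp [opD_tmul]
  | add a b ha hb => simp only [add_tmul, map_add, ha, hb]

theorem pentagon (v : (M ⊗[k] M) ⊗[k] M) (x : X) :
    TensorProduct.assoc k M M (M ⊗[k] X) (TensorProduct.assoc k (M ⊗[k] M) M X (v ⊗ₜ x)) =
    lTensor M (TensorProduct.assoc k M M X).toLinearMap (TensorProduct.assoc k M (M ⊗[k] M) X
      (TensorProduct.assoc k M M M v ⊗ₜ x)) := by
  suffices h : ∀ z : ((M ⊗[k] M) ⊗[k] M) ⊗[k] X, 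
    ((TensorProduct.assoc k M M (M ⊗[k] X)).toLinearMap ∘ₗ
      (TensorProduct.assoc k (M ⊗[k] M) M X).toLinearMap) z =
    (lTensor M (TensorProduct.assoc k M M X).toLinearMap ∘ₗ 
      (TensorProduct.assoc k M (M ⊗[k] M) X).toLinearMap ∘ₗ
      rTensor X (TensorProduct.assoc k M M M).toLinearMap) z by simpa using h (v ⊗ₜ x)
  intro z
  congr 1
  ext; simp

theorem tr_lid (counit : M →ₗ[k] k) (u : M ⊗[k] M) (x : X) :
    (TensorProduct.lid k M (rTensor M counit u)) ⊗ₜ x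
      = opE (M ⊗[k] X) counit (TensorProduct.assoc k M M X (u ⊗ₜ x)) := by
  induction u with
  | zero => simp
  | tmul a b => simp [opE_tmul, smul_tmul']
  | add a b ha hb => simp only [add_tmul, map_add, ha, hb]

theorem tr_rid (counit : M →ₗ[k] k) (u : M ⊗[k] M) (x : X) :
    (TensorProduct.rid k M (lTensor M counit u)) ⊗ₜ x
      = lTensor M (opE X counit) (TensorProduct.assoc k M M X (u ⊗ₜ x)) := by
  induction u with
  | zero => simp
  | tmul a b => simp [opE_tmul, smul_tmul']
  | add a b ha hb => simp only [add_tmul, map_add, ha, hb]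

/-- Nested form of the coalgebra axioms. -/
def Nested (X : Type*) [AddCommGroup X] [Module k X]
    (comul : M →ₗ[k] M ⊗[k] M) (counit : M →ₗ[k] k) : Prop :=
  (∀ z, opE (M ⊗[k] X) counit (opD X comul z) = z) ∧
  (∀ z, lTensor M (opE X counit) (opD X comul z) = z) ∧
  (∀ z, opD (M ⊗[k] X) comul (opD X comul z) = lTensor M (opD X comul) (opD X comul z))

theorem IsCounitalCoassoc.nested {comul : M →ₗ[k] M ⊗[k] M} {counit : M →ₗ[k] k}
    (h : IsCounitalCoassoc k comul counit) (X : Type*) [AddCommGroup X] [Module k X] :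
    Nested X comul counit := by
  obtain ⟨h1, h2, h3⟩ := h
  refine ⟨fun z => ?_, fun z => ?_, fun z => ?_⟩
  · induction z with
    | zero => simp
    | add a b ha hb => simp only [map_add, ha, hb]
    | tmul m x =>
      rw [opD_tmul, ← tr_lid]
      congr 1
      exact LinearMap.congr_fun h1 m
  · induction z with
    | zero => simp
    | add a b ha hb => simp only [map_add, ha, hb]
    | tmul m x =>
      rw [opD_tmul, ← tr_rid]
      congr 1
      exact LinearMap.congr_fun h2 m
  · induction z with
    | zero => simp
    | add a b ha hb => simp only [map_add, ha, hb]
    | tmul m x =>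
      rw [opD_tmul, ← tr_assoc3, ← tr_assoc3', pentagon]
      congr 3
      have := congrArg (TensorProduct.assoc k M M M) (LinearMap.congr_fun h3 m)
      simpa [rTensor, lTensor] using this

theorem IsCounitalCoassoc.of_nested {comul : M →ₗ[k] M ⊗[k] M} {counit : M →ₗ[k] k}
    (h : Nested k comul counit) : IsCounitalCoassoc k comul counit := by
  obtain ⟨h1, h2, h3⟩ := h
  refine ⟨?_, ?_, ?_⟩
  · ext m
    have := h1 (m ⊗ₜ 1)
    rw [opD_tmul, ← tr_lid] at this
    simpa [rTensor] using congrArg (TensorProduct.rid k M) this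
  · ext m
    have := h2 (m ⊗ₜ 1)
    rw [opD_tmul, ← tr_rid] at this
    simpa [lTensor] using congrArg (TensorProduct.rid k M) this
  · have key : ∀ m, TensorProduct.assoc k M M M (rTensor M comul (comul m))
        = lTensor M comul (comul m) := by
      intro m
      have := h3 (m ⊗ₜ 1)
      rw [opD_tmul, ← tr_assoc3, ← tr_assoc3', pentagon] at this
      have h4 := (TensorProduct.assoc k M (M ⊗[k] M) k).injective
        ((LinearEquiv.lTensor M (TensorProduct.assoc k M M k)).injective this)
      simpa using congrArg (TensorProduct.rid k _) h4
    ext m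
    apply (TensorProduct.assoc k M M M).injective
    simpa [rTensor, lTensor] using key m

/-! Translation of the twisted structure. -/

/-- reassociation of a word of length four -/
noncomputable def beta (P Q R S X : Type*) [AddCommGroup P] [Module k P]
    [AddCommGroup Q] [Module k Q] [AddCommGroup R] [Module k R] [AddCommGroup S] [Module k S]
    [AddCommGroup X] [Module k X] :
    ((P ⊗[k] Q) ⊗[k] (R ⊗[k] S)) ⊗[k] X ≃ₗ[k] P ⊗[k] (Q ⊗[k] (R ⊗[k] (S ⊗[k] X))) :=
  TensorProduct.assoc k (P ⊗[k] Q) (R ⊗[k] S) X ≪≫ₗ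
    LinearEquiv.lTensor (P ⊗[k] Q) (TensorProduct.assoc k R S X) ≪≫ₗ
    TensorProduct.assoc k P Q (R ⊗[k] (S ⊗[k] X))

theorem beta_tmul (u : P ⊗[k] Q) (v : R ⊗[k] S) (x : X) :
    beta P Q R S X ((u ⊗ₜ v) ⊗ₜ[k] x)
      = TensorProduct.assoc k P Q _ (u ⊗ₜ TensorProduct.assoc k R S X (v ⊗ₜ x)) := by
  simp [beta]

theorem beta_mid (f : P ⊗[k] Q →ₗ[k] R ⊗[k] S) (z : ((M ⊗[k] P) ⊗[k] (Q ⊗[k] N)) ⊗[k] X) :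
    beta M R S N X (rTensor X (midMap k f) z)
      = lTensor M (opS (N ⊗[k] X) f) (beta M P Q N X z) := by
  suffices h : (beta M R S N X).toLinearMap ∘ₗ rTensor X (midMap k f) =
      lTensor M (opS (N ⊗[k] X) f) ∘ₗ (beta M P Q N X).toLinearMap from
    LinearMap.congr_fun h z
  ext m p q n x
  simp [beta_tmul, midMap, opS_tmul]
  generalize f (p ⊗ₜ q) = u
  induction u with
  | zero => simp
  | tmul a b => simp [beta_tmul]
  | add a b ha hb => simp only [add_tmul, tmul_add, map_add, ha, hb]

theorem beta_map (f : A →ₗ[k] P ⊗[k] Q) (g : B →ₗ[k] R ⊗[k] S) (z : (A ⊗[k] B) ⊗[k] X) :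
    beta P Q R S X (rTensor X (TensorProduct.map f g) z)
      = opD _ f (lTensor A (opD X g) (TensorProduct.assoc k A B X z)) := by
  suffices h : (beta P Q R S X).toLinearMap ∘ₗ rTensor X (TensorProduct.map f g) =
      opD _ f ∘ₗ lTensor A (opD X g) ∘ₗ (TensorProduct.assoc k A B X).toLinearMap from
    LinearMap.congr_fun h z
  ext a b x
  simp [beta_tmul, opD_tmul]

theorem beta_map_twist (f : A ⊗[k] B →ₗ[k] P ⊗[k] Q) (g : M ⊗[k] N →ₗ[k] R ⊗[k] S)
    (z : ((A ⊗[k] B) ⊗[k] (M ⊗[k] N)) ⊗[k] X) :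
    beta P Q R S X (rTensor X (TensorProduct.map f g) z)
      = opS _ f (lTensor A (lTensor B (opS X g)) (beta A B M N X z)) := by
  suffices h : (beta P Q R S X).toLinearMap ∘ₗ rTensor X (TensorProduct.map f g) =
      opS _ f ∘ₗ lTensor A (lTensor B (opS X g)) ∘ₗ (beta A B M N X).toLinearMap from
    LinearMap.congr_fun h z
  ext a b m n x
  simp [beta_tmul, opS_tmul]

/-- nested comultiplication on words `A B X` -/
noncomputable def T (X : Type*) [AddCommGroup X] [Module k X]
    (dA : A →ₗ[k] A ⊗[k] A) (dB : B →ₗ[k] B ⊗[k] B) (s : A ⊗[k] B →ₗ[k] B ⊗[k] A) :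
    A ⊗[k] (B ⊗[k] X) →ₗ[k] A ⊗[k] (B ⊗[k] (A ⊗[k] (B ⊗[k] X))) :=
  lTensor A (opS _ s) ∘ₗ opD _ dA ∘ₗ lTensor A (opD X dB)

theorem T_apply (dA : A →ₗ[k] A ⊗[k] A) (dB : B →ₗ[k] B ⊗[k] B)
    (s : A ⊗[k] B →ₗ[k] B ⊗[k] A) (z : A ⊗[k] (B ⊗[k] X)) :
    T X dA dB s z = lTensor A (opS _ s) (opD _ dA (lTensor A (opD X dB) z)) := rfl

/-- reassociation of a word of pairs -/
noncomputable def al2 (A B X : Type*) [AddCommGroup A] [Module k A]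
    [AddCommGroup B] [Module k B] [AddCommGroup X] [Module k X] :
    (A ⊗[k] B) ⊗[k] ((A ⊗[k] B) ⊗[k] X) ≃ₗ[k] A ⊗[k] (B ⊗[k] (A ⊗[k] (B ⊗[k] X))) :=
  LinearEquiv.lTensor (A ⊗[k] B) (TensorProduct.assoc k A B X) ≪≫ₗ
    TensorProduct.assoc k A B (A ⊗[k] (B ⊗[k] X))

theorem assoc_lTensor (g : X →ₗ[k] Y) (z : (A ⊗[k] B) ⊗[k] X) :
    TensorProduct.assoc k A B Y (lTensor (A ⊗[k] B) g z)
      = lTensor A (lTensor B g) (TensorProduct.assoc k A B X z) := by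
  induction z with
  | zero => simp
  | tmul u x => simp [assoc_nat]
  | add a b ha hb => simp only [map_add, ha, hb]

theorem al2_opD (dA : A →ₗ[k] A ⊗[k] A) (dB : B →ₗ[k] B ⊗[k] B)
    (s : A ⊗[k] B →ₗ[k] B ⊗[k] A) (z : (A ⊗[k] B) ⊗[k] X) :
    al2 A B X (opD X (tComul k dA dB s) z) = T X dA dB s (TensorProduct.assoc k A B X z) := by
  have : al2 A B X (opD X (tComul k dA dB s) z)
      = beta A B A B X (rTensor X (tComul k dA dB s) z) := rfl
  rw [this, tComul, rTensor_comp, LinearMap.comp_apply, beta_mid, beta_map, T_apply]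

theorem opE_tCounit (eA : A →ₗ[k] k) (eB : B →ₗ[k] k) (z : (A ⊗[k] B) ⊗[k] X) :
    opE X (tCounit k eA eB) z = opE X eB (opE _ eA (TensorProduct.assoc k A B X z)) := by
  suffices h : opE X (tCounit k eA eB) =
      opE X eB ∘ₗ opE _ eA ∘ₗ (TensorProduct.assoc k A B X).toLinearMap from
    LinearMap.congr_fun h z
  ext a b x
  simp [opE_tmul, tCounit, mul_smul]

/-- The coalgebra axioms on words `A B X`. -/
def TNested (X : Type*) [AddCommGroup X] [Module k X]
    (dA : A →ₗ[k] A ⊗[k] A) (eA : A →ₗ[k] k) (dB : B →ₗ[k] B ⊗[k] B) (eB : B →ₗ[k] k)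
    (s : A ⊗[k] B →ₗ[k] B ⊗[k] A) : Prop :=
  (∀ z, opE _ eB (opE _ eA (T X dA dB s z)) = z) ∧
  (∀ z, lTensor A (lTensor B (opE X eB)) (lTensor A (lTensor B (opE _ eA)) (T X dA dB s z)) = z) ∧
  (∀ z, T _ dA dB s (T X dA dB s z) = lTensor A (lTensor B (T X dA dB s)) (T X dA dB s z))

theorem nested_iff (dA : A →ₗ[k] A ⊗[k] A) (eA : A →ₗ[k] k) (dB : B →ₗ[k] B ⊗[k] B)
    (eB : B →ₗ[k] k) (s : A ⊗[k] B →ₗ[k] B ⊗[k] A) :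
    Nested X (tComul k dA dB s) (tCounit k eA eB) ↔ TNested X dA eA dB eB s := by
  set α := TensorProduct.assoc k A B X with hα
  have hal : ∀ z, al2 A B X z
      = TensorProduct.assoc k A B _ (lTensor _ α.toLinearMap z) := fun z => rfl
  have a1 : ∀ z, α (opE _ (tCounit k eA eB) (opD X (tComul k dA dB s) z))
      = opE _ eB (opE _ eA (T X dA dB s (α z))) := by
    intro z
    rw [← al2_opD, hal, ← opE_tCounit, opE_nat]; rfl
  have a2 : ∀ z, α (lTensor _ (opE X (tCounit k eA eB)) (opD X (tComul k dA dB s) z))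
      = lTensor A (lTensor B (opE X eB)) (lTensor A (lTensor B (opE _ eA)) (T X dA dB s (α z))) := by
    intro z
    rw [← al2_opD, hal, hα, assoc_lTensor, assoc_lTensor]
    generalize TensorProduct.assoc k A B _ (opD X (tComul k dA dB s) z) = w
    rw [← und22 (h := lTensor B (opE X eB)) (i := lTensor B (opE _ eA))
      (f := lTensor B (opE X (tCounit k eA eB))) (g := lTensor B (α.symm.toLinearMap))]
    · rw [und20]
      intro x
      rw [und20]
      intro y
      exact α.symm_apply_apply y
    · intro x
      exact und22 (fun y => by simp [opE_tCounit, hα]) x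
  have a3 : ∀ z, TensorProduct.assoc k A B _ (lTensor _ (al2 A B X).toLinearMap
        (opD _ (tComul k dA dB s) (opD X (tComul k dA dB s) z)))
      = T _ dA dB s (T X dA dB s (α z)) := by
    intro z
    rw [← al2_opD, hal, ← al2_opD, opD_nat]
    exact congrArg (TensorProduct.assoc k A B _)
      (und21 (f := (TensorProduct.assoc k A B _).toLinearMap)
        (g := lTensor (A ⊗[k] B) α.toLinearMap) (h := (al2 A B X).toLinearMap)
        (fun x => rfl) _).symm
  have a4 : ∀ z, TensorProduct.assoc k A B _ (lTensor _ (al2 A B X).toLinearMap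
        (lTensor _ (opD X (tComul k dA dB s)) (opD X (tComul k dA dB s) z)))
      = lTensor A (lTensor B (T X dA dB s)) (T X dA dB s (α z)) := by
    intro z
    rw [und22 (h := T X dA dB s) (i := α.toLinearMap), assoc_lTensor, ← hal, al2_opD]
    exact al2_opD dA dB s
  have inj : Function.Injective (fun w => TensorProduct.assoc k A B _
      (lTensor (A ⊗[k] B) (al2 (k := k) A B X).toLinearMap w)) :=
    (TensorProduct.assoc k A B _).injective.comp
      (LinearEquiv.lTensor (A ⊗[k] B) (al2 (k := k) A B X)).injective
  constructor
  · rintro ⟨h1, h2, h3⟩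
    refine ⟨fun z => ?_, fun z => ?_, fun z => ?_⟩ <;> obtain ⟨z, rfl⟩ := α.surjective z
    · rw [← a1, h1]
    · rw [← a2, h2]
    · rw [← a3, ← a4, h3]
  · rintro ⟨h1, h2, h3⟩
    refine ⟨fun z => α.injective ?_, fun z => α.injective ?_, fun z => inj ?_⟩
    · rw [a1, h1]
    · rw [a2, h2]
    · simp only [a3, a4, h3]


/-! Translation of the compatibility conditions, in terms of the inverse twist. -/

/-- counit compatibility on words -/
def CNested (X : Type*) [AddCommGroup X] [Module k X]
    (eA : A →ₗ[k] k) (eB : B →ₗ[k] k) (s : A ⊗[k] B →ₗ[k] B ⊗[k] A) : Prop :=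
  (∀ z, lTensor B (opE X eA) (opS X s z) = opE _ eA z) ∧
  (∀ z, opE _ eB (opS X s z) = lTensor A (opE X eB) z)

/-- comultiplication compatibility on words -/
def KNested (X : Type*) [AddCommGroup X] [Module k X]
    (dA : A →ₗ[k] A ⊗[k] A) (dB : B →ₗ[k] B ⊗[k] B) (s : A ⊗[k] B →ₗ[k] B ⊗[k] A) : Prop :=
  ∀ z, opD _ dB (lTensor B (opD X dA) (opS X s z)) =
    lTensor B (opS _ s) (opS _ s (lTensor A (lTensor B (opS X s))
      (lTensor A (opS _ s) (opD _ dA (lTensor A (opD X dB) z)))))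

theorem tr_E1 (eA : A →ₗ[k] k) (u : B ⊗[k] A) (x : X) :
    lTensor B (opE X eA) (TensorProduct.assoc k B A X (u ⊗ₜ x))
      = TensorProduct.rid k B (lTensor B eA u) ⊗ₜ x := by
  induction u with
  | zero => simp
  | tmul a b => simp [opE_tmul, smul_tmul']
  | add a b ha hb => simp only [add_tmul, map_add, ha, hb]

theorem tr_E2 (eB : B →ₗ[k] k) (u : B ⊗[k] A) (x : X) :
    opE _ eB (TensorProduct.assoc k B A X (u ⊗ₜ x))
      = TensorProduct.lid k A (rTensor A eB u) ⊗ₜ x := by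
  induction u with
  | zero => simp
  | tmul a b => simp [opE_tmul, smul_tmul']
  | add a b ha hb => simp only [add_tmul, map_add, ha, hb]

theorem counitCompat_iff (eA : A →ₗ[k] k) (eB : B →ₗ[k] k) (τ : B ⊗[k] A ≃ₗ[k] A ⊗[k] B) :
    CounitCompat k eA eB τ.toLinearMap ↔
      (∀ z, TensorProduct.rid k B (lTensor B eA (τ.symm z))
          = TensorProduct.lid k B (rTensor B eA z)) ∧
      (∀ z, TensorProduct.lid k A (rTensor A eB (τ.symm z))
          = TensorProduct.rid k A (lTensor A eB z)) := by
  have c1 : ∀ w : B ⊗[k] k, TensorProduct.lid k B (TensorProduct.comm k B k w)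
      = TensorProduct.rid k B w := by
    intro w
    induction w with
    | zero => simp
    | tmul a b => simp
    | add a b ha hb => simp only [map_add, ha, hb]
  have c2 : ∀ w : k ⊗[k] A, TensorProduct.rid k A (TensorProduct.comm k k A w)
      = TensorProduct.lid k A w := by
    intro w
    induction w with
    | zero => simp
    | tmul a b => simp
    | add a b ha hb => simp only [map_add, ha, hb]
  unfold CounitCompat
  constructor
  · rintro ⟨h1, h2⟩
    refine ⟨fun z => ?_, fun z => ?_⟩ <;> obtain ⟨z, rfl⟩ := τ.surjective z
    · rw [τ.symm_apply_apply, ← c1]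
      exact congrArg (TensorProduct.lid k B) (LinearMap.congr_fun h1 z).symm
    · rw [τ.symm_apply_apply, ← c2]
      exact congrArg (TensorProduct.rid k A) (LinearMap.congr_fun h2 z).symm
  · rintro ⟨h1, h2⟩
    refine ⟨LinearMap.ext fun z => (TensorProduct.lid k B).injective ?_,
      LinearMap.ext fun z => (TensorProduct.rid k A).injective ?_⟩
    · have := h1 (τ z)
      rw [τ.symm_apply_apply, ← c1] at this
      exact this.symm
    · have := h2 (τ z)
      rw [τ.symm_apply_apply, ← c2] at this
      exact this.symm

theorem CounitCompat.cnested {eA : A →ₗ[k] k} {eB : B →ₗ[k] k} {τ : B ⊗[k] A ≃ₗ[k] A ⊗[k] B}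
    (h : CounitCompat k eA eB τ.toLinearMap) (X : Type*) [AddCommGroup X] [Module k X] :
    CNested X eA eB τ.symm.toLinearMap := by
  obtain ⟨h1, h2⟩ := (counitCompat_iff eA eB τ).1 h
  constructor
  · intro z
    suffices h : lTensor B (opE X eA) ∘ₗ (opS X τ.symm.toLinearMap) = opE _ eA from
      LinearMap.congr_fun h z
    ext a b x
    have := h1 (a ⊗ₜ b)
    simp [opS_tmul, opE_tmul, tr_E1] at this ⊢
    rw [this, smul_tmul']
  · intro z
    suffices h : opE _ eB ∘ₗ (opS X τ.symm.toLinearMap) = lTensor A (opE X eB) from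
      LinearMap.congr_fun h z
    ext a b x
    have := h2 (a ⊗ₜ b)
    simp [opS_tmul, opE_tmul, tr_E2] at this ⊢
    rw [this, smul_tmul']

theorem CounitCompat.of_cnested {eA : A →ₗ[k] k} {eB : B →ₗ[k] k}
    {τ : B ⊗[k] A ≃ₗ[k] A ⊗[k] B}
    (h : CNested k eA eB τ.symm.toLinearMap) : CounitCompat k eA eB τ.toLinearMap := by
  obtain ⟨h1, h2⟩ := h
  refine (counitCompat_iff eA eB τ).2 ⟨fun z => ?_, fun z => ?_⟩
  · induction z with
    | zero => simp
    | add a b ha hb => simp only [map_add, ha, hb]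
    | tmul a b =>
      have := h1 (a ⊗ₜ (b ⊗ₜ 1))
      rw [opS_tmul, tr_E1, opE_tmul] at this
      simpa using congrArg (TensorProduct.rid k B) this
  · induction z with
    | zero => simp
    | add a b ha hb => simp only [map_add, ha, hb]
    | tmul a b =>
      have := h2 (a ⊗ₜ (b ⊗ₜ 1))
      rw [opS_tmul, tr_E2, lTensor_tmul, opE_tmul] at this
      simpa using congrArg (TensorProduct.rid k A) this

theorem opS_symm (τ : B ⊗[k] A ≃ₗ[k] A ⊗[k] B) (z : B ⊗[k] (A ⊗[k] X)) :
    opS X τ.symm.toLinearMap (opS X τ.toLinearMap z) = z := by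
  have : ∀ w, rTensor X τ.symm.toLinearMap (rTensor X τ.toLinearMap w) = w := by
    intro w
    rw [← LinearMap.comp_apply, ← rTensor_comp]
    simp
  simp [opS, this]

theorem opS_symm' (τ : B ⊗[k] A ≃ₗ[k] A ⊗[k] B) (z : A ⊗[k] (B ⊗[k] X)) :
    opS X τ.toLinearMap (opS X τ.symm.toLinearMap z) = z := opS_symm τ.symm z

/-- comultiplication compatibility for `τ` on words -/
theorem comulCompat_word (dA : A →ₗ[k] A ⊗[k] A) (dB : B →ₗ[k] B ⊗[k] B)
    (τ : B ⊗[k] A →ₗ[k] A ⊗[k] B) (X : Type*) [AddCommGroup X] [Module k X] :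
    (∀ z, rTensor X (TensorProduct.map dA dB ∘ₗ τ) z = rTensor X (midMap k τ ∘ₗ
      TensorProduct.map τ τ ∘ₗ midMap k τ ∘ₗ TensorProduct.map dB dA) z) ↔
    ∀ z, opD _ dA (lTensor A (opD X dB) (opS X τ z)) =
      lTensor A (opS _ τ) (opS _ τ (lTensor B (lTensor A (opS X τ))
        (lTensor B (opS _ τ) (opD _ dB (lTensor B (opD X dA) z))))) := by
  have e1 : ∀ z, beta A A B B X (rTensor X (TensorProduct.map dA dB ∘ₗ τ) z) =
      opD _ dA (lTensor A (opD X dB) (opS X τ (TensorProduct.assoc k B A X z))) := by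
    intro z
    rw [rTensor_comp, LinearMap.comp_apply, beta_map]
    simp [opS]
  have e2 : ∀ z, beta A A B B X (rTensor X (midMap k τ ∘ₗ
      TensorProduct.map τ τ ∘ₗ midMap k τ ∘ₗ TensorProduct.map dB dA) z) =
      lTensor A (opS _ τ) (opS _ τ (lTensor B (lTensor A (opS X τ))
        (lTensor B (opS _ τ) (opD _ dB (lTensor B (opD X dA)
          (TensorProduct.assoc k B A X z)))))) := by
    intro z
    simp only [rTensor_comp, LinearMap.comp_apply]
    rw [beta_mid, beta_map_twist, beta_mid, beta_map]
  constructor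
  · intro h z
    obtain ⟨z, rfl⟩ := (TensorProduct.assoc k B A X).surjective z
    rw [← e1, ← e2, h]
  · intro h z
    apply (beta A A B B X).injective
    rw [e1, e2, h]

theorem knested_iff (dA : A →ₗ[k] A ⊗[k] A) (dB : B →ₗ[k] B ⊗[k] B)
    (τ : B ⊗[k] A ≃ₗ[k] A ⊗[k] B) (X : Type*) [AddCommGroup X] [Module k X] :
    (∀ z, opD _ dA (lTensor A (opD X dB) (opS X τ.toLinearMap z)) =
      lTensor A (opS _ τ.toLinearMap) (opS _ τ.toLinearMap
        (lTensor B (lTensor A (opS X τ.toLinearMap))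
        (lTensor B (opS _ τ.toLinearMap) (opD _ dB (lTensor B (opD X dA) z)))))) ↔
    KNested X dA dB τ.symm.toLinearMap := by
  constructor
  · intro h z
    have := h (opS X τ.symm.toLinearMap z)
    rw [opS_symm'] at this
    rw [this, und20 (opS_symm τ), opS_nat, opS_symm, und20 (und20 (opS_symm τ)),
      und20 (opS_symm τ)]
  · intro h z
    have := h (opS X τ.toLinearMap z)
    rw [opS_symm] at this
    rw [this, und20 (opS_symm' τ), opS_nat, opS_symm', und20 (und20 (opS_symm' τ)),
      und20 (opS_symm' τ)]

theorem ComulCompat.knested {dA : A →ₗ[k] A ⊗[k] A} {dB : B →ₗ[k] B ⊗[k] B}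
    {τ : B ⊗[k] A ≃ₗ[k] A ⊗[k] B} (h : ComulCompat k dA dB τ.toLinearMap)
    (X : Type*) [AddCommGroup X] [Module k X] :
    KNested X dA dB τ.symm.toLinearMap := by
  rw [← knested_iff, ← comulCompat_word]
  intro z
  rw [h]

theorem ComulCompat.of_knested {dA : A →ₗ[k] A ⊗[k] A} {dB : B →ₗ[k] B ⊗[k] B}
    {τ : B ⊗[k] A ≃ₗ[k] A ⊗[k] B} (h : KNested k dA dB τ.symm.toLinearMap) :
    ComulCompat k dA dB τ.toLinearMap := by
  rw [← knested_iff, ← comulCompat_word] at h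
  exact eq_of_rTensor h

/-! The diagram chase. -/

section Chase

variable {dA : A →ₗ[k] A ⊗[k] A} {eA : A →ₗ[k] k} {dB : B →ₗ[k] B ⊗[k] B} {eB : B →ₗ[k] k}
  {s : A ⊗[k] B →ₗ[k] B ⊗[k] A}

/-- hexagons on words -/
def HexA (X : Type*) [AddCommGroup X] [Module k X]
    (dA : A →ₗ[k] A ⊗[k] A) (s : A ⊗[k] B →ₗ[k] B ⊗[k] A) : Prop :=
  ∀ z, lTensor B (opD X dA) (opS X s z) = opS _ s (lTensor A (opS X s) (opD _ dA z))

/-- hexagons on words -/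
def HexB (X : Type*) [AddCommGroup X] [Module k X]
    (dB : B →ₗ[k] B ⊗[k] B) (s : A ⊗[k] B →ₗ[k] B ⊗[k] A) : Prop :=
  ∀ z, opD _ dB (opS X s z) = lTensor B (opS X s) (opS _ s (lTensor A (opD X dB) z))

theorem cnested_of (hA : IsCounitalCoassoc k dA eA) (hB : IsCounitalCoassoc k dB eB)
    (X : Type*) [AddCommGroup X] [Module k X] (H : TNested X dA eA dB eB s) :
    CNested X eA eB s := by
  obtain ⟨h1, h2, -⟩ := H
  have A1 := (hA.nested (B ⊗[k] (B ⊗[k] X))).1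
  have B2 := (hB.nested X).2.1
  constructor
  · intro z
    have := congrArg (opE _ eA) (h2 z)
    rw [opE_nat, opE_nat, T_apply, opE_nat, A1] at this
    rw [← this]
    rw [und22 (h := opE X eA) (i := lTensor A (opE X eB)) (fun x => (opE_nat _ _ x).symm),
      ← opS_nat, und20 B2]
  · intro z
    have := h1 z
    rw [T_apply, opE_nat, A1] at this
    have := congrArg (lTensor A (opE X eB)) this
    rw [← opE_nat, ← opS_nat, und20 B2] at this
    exact this

theorem hex_of (hA : IsCounitalCoassoc k dA eA) (hB : IsCounitalCoassoc k dB eB)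
    (X : Type*) [AddCommGroup X] [Module k X] (H : TNested X dA eA dB eB s)
    (C : CNested X eA eB s) (C' : CNested (A ⊗[k] X) eA eB s)
    (C'' : CNested (B ⊗[k] (A ⊗[k] X)) eA eB s) :
    HexA X dA s ∧ HexB X dB s := by
  have B2 := (hB.nested X).2.1
  have E0 : ∀ z, opS _ s (lTensor A (opD _ dB) (T X dA dB s z)) =
      lTensor B (T X dA dB s) (opS _ s (lTensor A (opD _ dB) z)) := by
    intro z
    have := congrArg (opE _ eA) (H.2.2 z)
    rw [opE_nat, T_apply, opE_nat, (hA.nested _).1, T_apply (z := z), opE_nat,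
      (hA.nested _).1] at this
    exact this
  have E1 : ∀ z, opS _ s (lTensor A (opD _ dB) (lTensor A (opS X s) (opD _ dA z))) =
      lTensor B (lTensor A (opS _ s)) (lTensor B (opD _ dA) (opS _ s (lTensor A (opD X dB) z))) := by
    intro z
    have := congrArg (lTensor B (lTensor A (lTensor B (lTensor A (opE X eB))))) (E0 z)
    rw [← opS_nat] at this
    rw [und22 (h := opD _ dB) (i := lTensor B (lTensor A (opE X eB)))
      (fun x => (opD_nat _ _ x).symm)] at this
    rw [T_apply] at this
    rw [und22 (h := opS _ s) (i := lTensor A (lTensor B (opE X eB)))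
      (fun x => (opS_nat _ _ x).symm), ← opD_nat, und20 B2] at this
    rw [this]
    rw [und21 (h := lTensor A (opS _ s) ∘ₗ opD _ dA), lTensor_comp, LinearMap.comp_apply]
    intro x
    rw [T_apply, und22 (h := opS _ s) (i := lTensor A (lTensor B (opE X eB)))
      (fun x => (opS_nat _ _ x).symm), ← opD_nat, und20 B2]
    rfl
  constructor
  · intro z
    have := congrArg (lTensor B (lTensor A (opE _ eB))) (E1 z)
    rw [← opS_nat, und20 (hB.nested _).2.1] at this
    rw [this, und21 (und21 C.2), und22 (h := opD X dA) (i := lTensor A (opE X eB))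
      (fun x => (opD_nat _ _ x).symm), ← opS_nat, und20 B2]
  · intro z
    have := congrArg (lTensor B (opE _ eA)) (E1 z)
    rw [C''.1, opE_nat, opE_nat, (hA.nested _).1] at this
    rw [this, und22 (h := opS X s) (i := opE _ eA) (fun x => (opE_nat _ _ x)),
      und20 (hA.nested _).1]

theorem knested_of {X : Type*} [AddCommGroup X] [Module k X] (hA : HexA X dA s)
    (hB : HexB X dB s) (hB' : HexB (A ⊗[k] X) dB s) : KNested X dA dB s := by
  intro z
  rw [hA, hB', und23 hB, ← opD_nat]

theorem hex_of_knested (hA : IsCounitalCoassoc k dA eA) (hB : IsCounitalCoassoc k dB eB)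
    (X : Type*) [AddCommGroup X] [Module k X] (K : KNested X dA dB s)
    (C : CNested X eA eB s) (CA : CNested (A ⊗[k] X) eA eB s) (CB : CNested (B ⊗[k] X) eA eB s)
    (CAB : CNested (A ⊗[k] (B ⊗[k] X)) eA eB s)
    (CBA : CNested (B ⊗[k] (A ⊗[k] X)) eA eB s) :
    HexA X dA s ∧ HexB X dB s := by
  constructor
  · intro z
    have := congrArg (opE _ eB) (K z)
    rw [(hB.nested _).1, opE_nat, CBA.2] at this
    rw [this, und22 (h := opS X s) (i := opE _ eB) (fun x => (opE_nat _ _ x)),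
      und21 CB.2, ← opD_nat, und20 (hB.nested _).1]
  · intro z
    have := congrArg (lTensor B (lTensor B (lTensor A (opE X eA)))) (K z)
    rw [← opD_nat, und20 (hA.nested _).2.1] at this
    rw [this, und22 (h := opS X s) (i := lTensor A (lTensor B (opE X eA)))
      (fun x => (opS_nat _ _ x).symm), ← opS_nat, und21 (und21 C.1), und21 CB.1,
      (hA.nested _).2.1]

theorem tnested_of (hA : IsCounitalCoassoc k dA eA) (hB : IsCounitalCoassoc k dB eB)
    (X : Type*) [AddCommGroup X] [Module k X] (C : CNested (B ⊗[k] X) eA eB s)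
    (HA : HexA (B ⊗[k] (B ⊗[k] X)) dA s) (HB : HexB (B ⊗[k] X) dB s) :
    TNested X dA eA dB eB s := by
  refine ⟨fun z => ?_, fun z => ?_, fun z => ?_⟩
  · rw [T_apply, opE_nat, (hA.nested _).1, C.2, und20 (hB.nested _).1]
  · rw [T_apply, und21 C.1, (hA.nested _).2.1, und20 (hB.nested _).2.1]
  · have lhs : T _ dA dB s (T X dA dB s z) =
        lTensor A (opS _ s) (lTensor A (lTensor A (lTensor B (opS _ s)))
          (lTensor A (lTensor A (opS _ s)) (lTensor A (opD _ dA) (opD _ dA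
            (lTensor A (lTensor B (opD X dB)) (lTensor A (opD X dB) z)))))) := by
      rw [T_apply, T_apply, und23 HB, ← opD_nat, opD_nat, opD_nat, (hA.nested _).2.2,
        und22 (hB.nested _).2.2]
    rw [lhs, T_apply]
    generalize hy : lTensor A (opD X dB) z = y
    have hT : ∀ w, lTensor A (lTensor B (T X dA dB s)) w =
        lTensor A (lTensor B (lTensor A (opS _ s))) (lTensor A (lTensor B (opD _ dA))
          (lTensor A (lTensor B (lTensor A (opD X dB))) w)) := by
      intro w
      simp only [T, lTensor_comp, LinearMap.comp_apply]
    rw [hT, und22 (h := opS _ s) (i := lTensor A (lTensor B (opD X dB)))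
      (fun x => (opS_nat _ _ x).symm), ← opD_nat, und23 HA,
      und22 (h := opS _ s) (i := lTensor A (lTensor B (opS _ s)))
      (fun x => (opS_nat _ _ x).symm)]

end Chase

end Aux
end TTP

open TTP in
/-- the induced comultiplication and counit make `A ⊗ B` a counital
coassociative coalgebra if and only if `τ` is compatible with the counits and
with the comultiplications. -/
theorem twistedTensorProduct_isCounitalCoassoc_iff
    {k A B : Type*} [Field k]
    [AddCommGroup A] [Module k A] [AddCommGroup B] [Module k B]
    (comulA : A →ₗ[k] A ⊗[k] A) (counitA : A →ₗ[k] k)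
    (comulB : B →ₗ[k] B ⊗[k] B) (counitB : B →ₗ[k] k)
    (hA : IsCounitalCoassoc k comulA counitA) (hB : IsCounitalCoassoc k comulB counitB)
    (τ : B ⊗[k] A ≃ₗ[k] A ⊗[k] B) :
    IsCounitalCoassoc k (tComul k comulA comulB τ.symm.toLinearMap)
        (tCounit k counitA counitB)
      ↔ (CounitCompat k counitA counitB τ.toLinearMap
          ∧ ComulCompat k comulA comulB τ.toLinearMap) := by
  constructor
  · intro h
    have C : CounitCompat k counitA counitB τ.toLinearMap :=
      CounitCompat.of_cnested (cnested_of hA hB k ((nested_iff _ _ _ _ _).1 (h.nested k)))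
    refine ⟨C, ComulCompat.of_knested ?_⟩
    obtain ⟨a1, b1⟩ := hex_of hA hB k ((nested_iff _ _ _ _ _).1 (h.nested k))
      (C.cnested _) (C.cnested _) (C.cnested _)
    obtain ⟨-, b2⟩ := hex_of hA hB (A ⊗[k] k) ((nested_iff _ _ _ _ _).1 (h.nested _))
      (C.cnested _) (C.cnested _) (C.cnested _)
    exact knested_of a1 b1 b2
  · rintro ⟨C, K⟩
    refine IsCounitalCoassoc.of_nested ((nested_iff _ _ _ _ _).2 ?_)
    refine tnested_of hA hB k (C.cnested _) ?_ ?_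
    · exact (hex_of_knested hA hB _ (K.knested _) (C.cnested _) (C.cnested _) (C.cnested _)
        (C.cnested _) (C.cnested _)).1
    · exact (hex_of_knested hA hB _ (K.knested _) (C.cnested _) (C.cnested _) (C.cnested _)
        (C.cnested _) (C.cnested _)).2
end

section
/- Let A and B be separable unital associative k-algebras with right inverses Γ_A : A → A⊗A and Γ_B : B → B⊗B of the multiplications that are bimodule morphisms, and let τ : B⊗A → A⊗B be a twisting map. Then the two conditions (i) (Γ_A⊗1_B)∘τ = (1_A⊗τ)∘(τ⊗1_A)∘(1_B⊗Γ_A) and (ii) (1_A⊗Γ_B)∘τ = (τ⊗1_B)∘(1_B⊗τ)∘(Γ_B⊗1_A) hold if and only if the twisted tensor product algebra A⊗_τ B is separable with Γ_{A⊗_τ B} = (1_A⊗τ^{-1}⊗1_B)∘(Γ_A⊗Γ_B) a right inverse of its multiplication that is an (A⊗_τ B)-bimodule morphism. -/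
open scoped TensorProduct

namespace TTP
section Aux
variable {k : Type*} [Field k]

section J
variable {X Y R S P Q : Type*}
  [AddCommGroup X] [Module k X] [AddCommGroup Y] [Module k Y]
  [AddCommGroup R] [Module k R] [AddCommGroup S] [Module k S]
  [AddCommGroup P] [Module k P] [AddCommGroup Q] [Module k Q]

/-- `z ↦ x ⊗ z ⊗ y`. -/
noncomputable def auxJ (x : X) (y : Y) : R ⊗[k] S →ₗ[k] (X ⊗[k] R) ⊗[k] (S ⊗[k] Y) :=
  TensorProduct.map (TensorProduct.mk k X R x) ((TensorProduct.mk k S Y).flip y)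

lemma auxJ_tmul (x : X) (y : Y) (r : R) (s : S) :
    auxJ (k := k) x y (r ⊗ₜ[k] s) = (x ⊗ₜ[k] r) ⊗ₜ[k] (s ⊗ₜ[k] y) := by
  simp [auxJ]

lemma auxJ_ladd (z : Y) (x y : X) (w : R ⊗[k] S) :
    auxJ (k := k)  (x + y) z w = auxJ (k := k)  x z w + auxJ (k := k)  y z w := by
  simp [auxJ, TensorProduct.map_add_left]

lemma auxJ_lsmul (z : Y) (t : k) (x : X) (w : R ⊗[k] S) :
    auxJ (k := k)  (t • x) z w = t • auxJ (k := k)  x z w := by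
  simp [auxJ, TensorProduct.map_smul_left]

lemma auxJ_radd (z : X) (x y : Y) (w : R ⊗[k] S) :
    auxJ (k := k) z (x + y)  w = auxJ (k := k) z x  w + auxJ (k := k) z y  w := by
  simp [auxJ, TensorProduct.map_add_right]

lemma auxJ_rsmul (z : X) (t : k) (x : Y) (w : R ⊗[k] S) :
    auxJ (k := k) z (t • x)  w = t • auxJ (k := k) z x  w := by
  simp [auxJ, TensorProduct.map_smul_right]

lemma midMap_tmul (f : P ⊗[k] Q →ₗ[k] R ⊗[k] S) (x : X) (y : Y) (p : P) (q : Q) :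
    midMap k f ((x ⊗ₜ[k] p) ⊗ₜ[k] (q ⊗ₜ[k] y)) = auxJ x y (f (p ⊗ₜ[k] q)) := by
  simp only [midMap, LinearMap.comp_apply, LinearEquiv.coe_coe, TensorProduct.assoc_symm_tmul,
    TensorProduct.map_tmul, TensorProduct.assoc_tmul, LinearMap.id_apply]
  induction f (p ⊗ₜ[k] q) using TensorProduct.induction_on with
  | zero => simp
  | tmul r s => simp [auxJ_tmul]
  | add a b ha hb => simp only [TensorProduct.tmul_add, TensorProduct.add_tmul, map_add, ha, hb]

lemma midMap_auxJ (f : P ⊗[k] Q →ₗ[k] R ⊗[k] S) (x : X) (y : Y) (z : P ⊗[k] Q) :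
    midMap k f (auxJ x y z) = auxJ x y (f z) := by
  induction z using TensorProduct.induction_on with
  | zero => simp
  | tmul r s => rw [auxJ_tmul, midMap_tmul]
  | add a b ha hb => simp only [map_add, ha, hb]

lemma midMap_comp_symm (f : P ⊗[k] Q ≃ₗ[k] R ⊗[k] S) (w : (X ⊗[k] R) ⊗[k] (S ⊗[k] Y)) :
    midMap k f.toLinearMap (midMap k f.symm.toLinearMap w) = w := by
  have : midMap (X := X) (Y := Y) k f.toLinearMap ∘ₗ midMap k f.symm.toLinearMap
      = LinearMap.id := by
    ext x r s y
    simp [midMap_tmul, midMap_auxJ, auxJ_tmul]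
  exact LinearMap.congr_fun this w

lemma midMap_inj (f : P ⊗[k] Q ≃ₗ[k] R ⊗[k] S) :
    Function.Injective (midMap (X := X) (Y := Y) k f.toLinearMap) := by
  intro a b h
  have := congrArg (midMap k f.symm.toLinearMap) h
  have e := fun w => midMap_comp_symm (X := X) (Y := Y) f.symm w
  simp only [LinearEquiv.symm_symm] at e
  rwa [e, e] at this
end J

section acts
variable {X : Type*} [AddCommGroup X] [Module k X]

/-- left action on the first factor -/
noncomputable def lact (mul : X ⊗[k] X →ₗ[k] X) : X →ₗ[k] X ⊗[k] X →ₗ[k] X ⊗[k] X :=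
  LinearMap.rTensorHom X ∘ₗ TensorProduct.curry mul

/-- right action on the second factor -/
noncomputable def ract (mul : X ⊗[k] X →ₗ[k] X) : X →ₗ[k] X ⊗[k] X →ₗ[k] X ⊗[k] X :=
  LinearMap.lTensorHom X ∘ₗ (TensorProduct.curry mul).flip

lemma lact_tmul (mul : X ⊗[k] X →ₗ[k] X) (x p q : X) :
    lact mul x (p ⊗ₜ[k] q) = mul (x ⊗ₜ[k] p) ⊗ₜ[k] q := by simp [lact]

lemma ract_tmul (mul : X ⊗[k] X →ₗ[k] X) (x p q : X) :
    ract mul x (p ⊗ₜ[k] q) = p ⊗ₜ[k] mul (q ⊗ₜ[k] x) := by simp [ract]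

lemma lact_one (mul : X ⊗[k] X →ₗ[k] X) (o : X) (h : ∀ x, mul (o ⊗ₜ[k] x) = x) :
    lact mul o = LinearMap.id := by
  ext p q; simp [lact_tmul, h]

lemma ract_one (mul : X ⊗[k] X →ₗ[k] X) (o : X) (h : ∀ x, mul (x ⊗ₜ[k] o) = x) :
    ract mul o = LinearMap.id := by
  ext p q; simp [ract_tmul, h]

lemma bim_eq (mul : X ⊗[k] X →ₗ[k] X) (x z : X) (t : X ⊗[k] X) :
    TensorProduct.map mul mul ((TensorProduct.assoc k X X (X ⊗[k] X)).symm
      (x ⊗ₜ[k] (TensorProduct.assoc k X X X) (t ⊗ₜ[k] z))) = lact mul x (ract mul z t) := by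
  induction t using TensorProduct.induction_on with
  | zero => simp
  | tmul r s => simp [lact_tmul, ract_tmul]
  | add a b ha hb => simp only [TensorProduct.tmul_add, TensorProduct.add_tmul, map_add, ha, hb]

lemma sep_iff (mul : X ⊗[k] X →ₗ[k] X) (Γ : X →ₗ[k] X ⊗[k] X) (o : X)
    (h1 : ∀ x, mul (o ⊗ₜ[k] x) = x) (h2 : ∀ x, mul (x ⊗ₜ[k] o) = x) :
    IsSeparableWith k mul Γ ↔ mul ∘ₗ Γ = LinearMap.id ∧
      (∀ x y, Γ (mul (x ⊗ₜ[k] y)) = lact mul x (Γ y)) ∧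
      (∀ y z, Γ (mul (y ⊗ₜ[k] z)) = ract mul z (Γ y)) := by
  unfold IsSeparableWith
  refine and_congr_right fun _ => ?_
  have key : (Γ ∘ₗ mul ∘ₗ TensorProduct.map LinearMap.id mul
      = TensorProduct.map mul mul
          ∘ₗ (TensorProduct.assoc k X X (X ⊗[k] X)).symm.toLinearMap
          ∘ₗ TensorProduct.map LinearMap.id (TensorProduct.assoc k X X X).toLinearMap
          ∘ₗ TensorProduct.map LinearMap.id (TensorProduct.map Γ LinearMap.id)) ↔
      ∀ x y z, Γ (mul (x ⊗ₜ[k] mul (y ⊗ₜ[k] z))) = lact mul x (ract mul z (Γ y)) := by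
    constructor
    · intro h x y z
      have := LinearMap.congr_fun h (x ⊗ₜ[k] (y ⊗ₜ[k] z))
      simpa [bim_eq] using this
    · intro h
      ext x y z
      simpa [bim_eq] using h x y z
  rw [key]
  constructor
  · intro h
    refine ⟨fun x y => ?_, fun y z => ?_⟩
    · have := h x y o
      rwa [h2, ract_one mul o h2] at this
    · have := h o y z
      rwa [h1, lact_one mul o h1] at this
  · rintro ⟨hl, hr⟩ x y z
    rw [hl, hr]
end acts

variable {A B : Type*} [AddCommGroup A] [Module k A] [AddCommGroup B] [Module k B]

lemma unital {mul : A ⊗[k] A →ₗ[k] A} {unit : k →ₗ[k] A} (h : IsUnitalAssoc k mul unit) :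
    (∀ x, mul (unit 1 ⊗ₜ[k] x) = x) ∧ (∀ x, mul (x ⊗ₜ[k] unit 1) = x) := by
  obtain ⟨h1, h2, -⟩ := h
  refine ⟨fun x => ?_, fun x => ?_⟩
  · simpa using LinearMap.congr_fun h1 x
  · simpa using LinearMap.congr_fun h2 x

variable (mulA : A ⊗[k] A →ₗ[k] A) (mulB : B ⊗[k] B →ₗ[k] B) (τ : B ⊗[k] A ≃ₗ[k] A ⊗[k] B)

/-- `(1 ⊗ τ)(τ ⊗ 1)` -/
noncomputable def auxNA : B ⊗[k] (A ⊗[k] A) →ₗ[k] (A ⊗[k] A) ⊗[k] B :=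
  (TensorProduct.assoc k A A B).symm.toLinearMap
      ∘ₗ TensorProduct.map LinearMap.id τ.toLinearMap
      ∘ₗ (TensorProduct.assoc k A B A).toLinearMap
      ∘ₗ TensorProduct.map τ.toLinearMap LinearMap.id
      ∘ₗ (TensorProduct.assoc k B A A).symm.toLinearMap

/-- `(τ ⊗ 1)(1 ⊗ τ)` -/
noncomputable def auxNB : (B ⊗[k] B) ⊗[k] A →ₗ[k] A ⊗[k] (B ⊗[k] B) :=
  (TensorProduct.assoc k A B B).toLinearMap
      ∘ₗ TensorProduct.map τ.toLinearMap LinearMap.id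
      ∘ₗ (TensorProduct.assoc k B A B).symm.toLinearMap
      ∘ₗ TensorProduct.map LinearMap.id τ.toLinearMap
      ∘ₗ (TensorProduct.assoc k B B A).toLinearMap

lemma midA_iff (ΓA : A →ₗ[k] A ⊗[k] A) : MidACompat k ΓA τ.toLinearMap ↔
    ∀ b a, TensorProduct.map ΓA LinearMap.id (τ (b ⊗ₜ[k] a)) = auxNA τ (b ⊗ₜ[k] ΓA a) := by
  constructor
  · intro h b a
    exact LinearMap.congr_fun h (b ⊗ₜ[k] a)
  · intro h
    exact TensorProduct.ext' h

lemma midB_iff (ΓB : B →ₗ[k] B ⊗[k] B) : MidBCompat k ΓB τ.toLinearMap ↔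
    ∀ b a, TensorProduct.map LinearMap.id ΓB (τ (b ⊗ₜ[k] a)) = auxNB τ (ΓB b ⊗ₜ[k] a) := by
  constructor
  · intro h b a
    exact LinearMap.congr_fun h (b ⊗ₜ[k] a)
  · intro h
    exact TensorProduct.ext' h

lemma tMul_tmul (a c : A) (b d : B) :
    tMul k mulA mulB τ.toLinearMap ((a ⊗ₜ[k] b) ⊗ₜ[k] (c ⊗ₜ[k] d))
      = TensorProduct.map mulA mulB (auxJ a d (τ (b ⊗ₜ[k] c))) := by
  simp [tMul, midMap_tmul]

/-- multiplicativity in `B` -/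
def MulB : Prop := ∀ (b f : B) (c : A), τ (mulB (b ⊗ₜ[k] f) ⊗ₜ[k] c) =
  TensorProduct.map LinearMap.id mulB (TensorProduct.assoc k A B B
    (TensorProduct.map τ.toLinearMap LinearMap.id
      ((TensorProduct.assoc k B A B).symm (b ⊗ₜ[k] τ (f ⊗ₜ[k] c)))))

/-- multiplicativity in `A` -/
def MulA : Prop := ∀ (b : B) (c f : A), τ (b ⊗ₜ[k] mulA (c ⊗ₜ[k] f)) =
  TensorProduct.map mulA LinearMap.id ((TensorProduct.assoc k A A B).symm
    (TensorProduct.map LinearMap.id τ.toLinearMap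
      ((TensorProduct.assoc k A B A) (τ (b ⊗ₜ[k] c) ⊗ₜ[k] f))))

/-- the map `t ⊗ b ↦ a t ⊗ b v` -/
noncomputable def auxΦ (a : A) (v : B ⊗[k] B) :
    (A ⊗[k] A) ⊗[k] B →ₗ[k] (A ⊗[k] A) ⊗[k] (B ⊗[k] B) :=
  TensorProduct.map (lact mulA a) ((lact mulB).flip v)

/-- the map `a ⊗ t ↦ u a ⊗ t d` -/
noncomputable def auxΨ (u : A ⊗[k] A) (d : B) :
    A ⊗[k] (B ⊗[k] B) →ₗ[k] (A ⊗[k] A) ⊗[k] (B ⊗[k] B) :=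
  TensorProduct.map ((ract mulA).flip u) (ract mulB d)

lemma auxΦ_add (a : A) (x y : B ⊗[k] B) (w : (A ⊗[k] A) ⊗[k] B) :
    auxΦ mulA mulB a (x + y)  w = auxΦ mulA mulB a x  w + auxΦ mulA mulB a y  w := by
  simp [auxΦ, TensorProduct.map_add_right]

lemma auxΦ_smul (a : A) (t : k) (x : B ⊗[k] B) (w : (A ⊗[k] A) ⊗[k] B) :
    auxΦ mulA mulB a (t • x)  w = t • auxΦ mulA mulB a x  w := by
  simp [auxΦ, TensorProduct.map_smul_right]

lemma auxΨ_add (d : B) (x y : A ⊗[k] A) (w : A ⊗[k] (B ⊗[k] B)) :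
    auxΨ mulA mulB  (x + y) d w = auxΨ mulA mulB  x d w + auxΨ mulA mulB  y d w := by
  simp [auxΨ, TensorProduct.map_add_left]

lemma auxΨ_smul (d : B) (t : k) (x : A ⊗[k] A) (w : A ⊗[k] (B ⊗[k] B)) :
    auxΨ mulA mulB  (t • x) d w = t • auxΨ mulA mulB  x d w := by
  simp [auxΨ, TensorProduct.map_smul_left]

lemma keyL_aux (hB : MulB mulB τ) (a c1 : A) (b d2 : B) (z : B ⊗[k] A) :
    midMap k τ.toLinearMap (lact (tMul k mulA mulB τ.toLinearMap) (a ⊗ₜ[k] b) (auxJ c1 d2 z))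
      = TensorProduct.lift (LinearMap.mk₂ k
          (fun c2 d1 => auxΦ mulA mulB a (d1 ⊗ₜ[k] d2) (auxNA τ (b ⊗ₜ[k] (c1 ⊗ₜ[k] c2))))
          (by intros; simp [TensorProduct.tmul_add])
          (by intros; simp)
          (by intros; simp [TensorProduct.add_tmul, auxΦ_add])
          (by intros; simp [← TensorProduct.smul_tmul', auxΦ_smul]))
          (τ z) := by
  induction z using TensorProduct.induction_on with
  | zero => simp
  | add x y hx hy => simp only [map_add, hx, hy]
  | tmul f c =>
    rw [auxJ_tmul, lact_tmul, tMul_tmul]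
    have h1 : ∀ (s w : A ⊗[k] B), w = τ (f ⊗ₜ[k] c) → midMap k τ.toLinearMap
        (TensorProduct.map mulA mulB (auxJ a f s) ⊗ₜ[k] (c ⊗ₜ[k] d2)) =
        TensorProduct.lift (LinearMap.mk₂ k (fun c1' b' =>
          auxJ (mulA (a ⊗ₜ[k] c1')) d2 (TensorProduct.map LinearMap.id mulB
            (TensorProduct.assoc k A B B (TensorProduct.map τ.toLinearMap LinearMap.id
              ((TensorProduct.assoc k B A B).symm (b' ⊗ₜ[k] w))))))
          (by intros; simp [TensorProduct.tmul_add, auxJ_ladd])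
          (by intros; simp [auxJ_lsmul])
          (by intros; simp [TensorProduct.add_tmul])
          (by intros; simp [← TensorProduct.smul_tmul'])) s := by
      intro s w hw
      induction s using TensorProduct.induction_on with
      | zero => simp
      | add x y hx hy => simp only [map_add, TensorProduct.add_tmul, hx, hy]
      | tmul c1' b' =>
        rw [TensorProduct.lift.tmul, LinearMap.mk₂_apply, hw, ← hB]
        simp [auxJ_tmul, midMap_tmul]
    rw [h1 _ _ rfl]
    generalize τ (f ⊗ₜ[k] c) = w
    induction w using TensorProduct.induction_on with
    | zero => 
      generalize τ (b ⊗ₜ[k] c1) = s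
      induction s using TensorProduct.induction_on with
      | zero => simp
      | add x y hx hy => simp only [map_add, hx, hy, map_zero, add_zero]
      | tmul c1' b' => simp
    | add x y hx hy =>
      rw [map_add, ← hx, ← hy]
      generalize τ (b ⊗ₜ[k] c1) = s
      induction s using TensorProduct.induction_on with
      | zero => simp
      | add x y hx hy => simp only [map_add, hx, hy]; abel
      | tmul c1' b' => simp [TensorProduct.tmul_add]
    | tmul c2 d1 =>
      simp only [auxNA, LinearMap.comp_apply, LinearEquiv.coe_coe, TensorProduct.lift.tmul,
        LinearMap.mk₂_apply, TensorProduct.assoc_symm_tmul, TensorProduct.map_tmul]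
      generalize τ (b ⊗ₜ[k] c1) = s
      induction s using TensorProduct.induction_on with
      | zero => simp
      | add x y hx hy => simp only [map_add, TensorProduct.add_tmul, hx, hy]
      | tmul c1' b' =>
        simp only [TensorProduct.assoc_tmul, TensorProduct.map_tmul, TensorProduct.lift.tmul,
          LinearMap.mk₂_apply, LinearMap.id_apply, LinearEquiv.coe_coe,
          TensorProduct.assoc_symm_tmul]
        generalize τ (b' ⊗ₜ[k] c2) = r
        induction r using TensorProduct.induction_on with
        | zero => simp
        | add x y hx hy => simp only [map_add, TensorProduct.add_tmul, TensorProduct.tmul_add, hx, hy]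
        | tmul p q => simp [auxJ_tmul, auxΦ, lact_tmul]

lemma keyL (hB : MulB mulB τ) (a : A) (b : B) (u : A ⊗[k] A) (v : B ⊗[k] B) :
    midMap k τ.toLinearMap (lact (tMul k mulA mulB τ.toLinearMap) (a ⊗ₜ[k] b)
      (midMap k τ.symm.toLinearMap (u ⊗ₜ[k] v)))
      = auxΦ mulA mulB a v (auxNA τ (b ⊗ₜ[k] u)) := by
  induction u using TensorProduct.induction_on with
  | zero => simp
  | add x y hx hy => simp only [map_add, TensorProduct.add_tmul, TensorProduct.tmul_add, hx, hy]
  | tmul c1 c2 =>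
    induction v using TensorProduct.induction_on with
    | zero => simp [auxΦ, TensorProduct.map_zero_right]
    | add x y hx hy =>
      simp only [map_add, TensorProduct.tmul_add, hx, hy, auxΦ, TensorProduct.map_add_right,
        LinearMap.add_apply]
    | tmul d1 d2 =>
      rw [midMap_tmul, keyL_aux mulA mulB τ hB, LinearEquiv.coe_coe,
        LinearEquiv.apply_symm_apply, TensorProduct.lift.tmul, LinearMap.mk₂_apply]

lemma keyR_aux (hA : MulA mulA τ) (a c1 : A) (b d2 : B) (z : B ⊗[k] A) :
    midMap k τ.toLinearMap (ract (tMul k mulA mulB τ.toLinearMap) (a ⊗ₜ[k] b) (auxJ c1 d2 z))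
      = TensorProduct.lift (LinearMap.mk₂ k
          (fun c2 d1 => auxΨ mulA mulB (c1 ⊗ₜ[k] c2) b (auxNB τ ((d1 ⊗ₜ[k] d2) ⊗ₜ[k] a)))
          (by intros; simp [TensorProduct.tmul_add, auxΨ_add])
          (by intros; simp [auxΨ_smul])
          (by intros; simp [TensorProduct.add_tmul])
          (by intros; simp [← TensorProduct.smul_tmul']))
          (τ z) := by
  induction z using TensorProduct.induction_on with
  | zero => simp
  | add x y hx hy => simp only [map_add, hx, hy]
  | tmul f c =>
    rw [auxJ_tmul, ract_tmul, tMul_tmul]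
    have h1 : ∀ (s w : A ⊗[k] B), w = τ (f ⊗ₜ[k] c) → midMap k τ.toLinearMap
        ((c1 ⊗ₜ[k] f) ⊗ₜ[k] TensorProduct.map mulA mulB (auxJ c b s)) =
        TensorProduct.lift (LinearMap.mk₂ k (fun a' d' =>
          auxJ c1 (mulB (d' ⊗ₜ[k] b)) (TensorProduct.map mulA LinearMap.id
            ((TensorProduct.assoc k A A B).symm (TensorProduct.map LinearMap.id τ.toLinearMap
              ((TensorProduct.assoc k A B A) (w ⊗ₜ[k] a'))))))
          (by intros; simp [TensorProduct.tmul_add])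
          (by intros; simp)
          (by intros; simp [TensorProduct.add_tmul, auxJ_radd])
          (by intros; simp [← TensorProduct.smul_tmul', auxJ_rsmul])) s := by
      intro s w hw
      induction s using TensorProduct.induction_on with
      | zero => simp
      | add x y hx hy => simp only [map_add, TensorProduct.tmul_add, hx, hy]
      | tmul c1' b' =>
        rw [TensorProduct.lift.tmul, LinearMap.mk₂_apply, hw, ← hA]
        simp [auxJ_tmul, midMap_tmul]
    rw [h1 _ _ rfl]
    generalize τ (f ⊗ₜ[k] c) = w
    induction w using TensorProduct.induction_on with
    | zero => 
      generalize τ (d2 ⊗ₜ[k] a) = s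
      induction s using TensorProduct.induction_on with
      | zero => simp
      | add x y hx hy => simp only [map_add, hx, hy, map_zero, add_zero]
      | tmul c1' b' => simp
    | add x y hx hy =>
      rw [map_add, ← hx, ← hy]
      generalize τ (d2 ⊗ₜ[k] a) = s
      induction s using TensorProduct.induction_on with
      | zero => simp
      | add x y hx hy => simp only [map_add, hx, hy]; abel
      | tmul c1' b' => simp [TensorProduct.add_tmul]
    | tmul c2 d1 =>
      simp only [auxNB, LinearMap.comp_apply, LinearEquiv.coe_coe, TensorProduct.lift.tmul,
        LinearMap.mk₂_apply, TensorProduct.assoc_tmul, TensorProduct.map_tmul]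
      generalize τ (d2 ⊗ₜ[k] a) = s
      induction s using TensorProduct.induction_on with
      | zero => simp
      | add x y hx hy => simp only [map_add, TensorProduct.tmul_add, hx, hy]
      | tmul a' d' =>
        simp only [TensorProduct.assoc_tmul, TensorProduct.map_tmul, TensorProduct.lift.tmul,
          LinearMap.mk₂_apply, LinearMap.id_apply, LinearEquiv.coe_coe,
          TensorProduct.assoc_symm_tmul]
        generalize τ (d1 ⊗ₜ[k] a') = r
        induction r using TensorProduct.induction_on with
        | zero => simp
        | add x y hx hy => simp only [map_add, TensorProduct.add_tmul, TensorProduct.tmul_add, hx, hy]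
        | tmul p q => simp [auxJ_tmul, auxΨ, ract_tmul]

lemma keyR (hA : MulA mulA τ) (a : A) (b : B) (u : A ⊗[k] A) (v : B ⊗[k] B) :
    midMap k τ.toLinearMap (ract (tMul k mulA mulB τ.toLinearMap) (a ⊗ₜ[k] b)
      (midMap k τ.symm.toLinearMap (u ⊗ₜ[k] v)))
      = auxΨ mulA mulB u b (auxNB τ (v ⊗ₜ[k] a)) := by
  induction v using TensorProduct.induction_on with
  | zero => simp
  | add x y hx hy => simp only [map_add, TensorProduct.add_tmul, TensorProduct.tmul_add, hx, hy]
  | tmul d1 d2 =>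
    induction u using TensorProduct.induction_on with
    | zero => simp [auxΨ, TensorProduct.map_zero_left]
    | add x y hx hy =>
      simp only [map_add, TensorProduct.add_tmul, hx, hy, auxΨ, TensorProduct.map_add_left,
        LinearMap.add_apply]
    | tmul c1 c2 =>
      rw [midMap_tmul, keyR_aux mulA mulB τ hA, LinearEquiv.coe_coe,
        LinearEquiv.apply_symm_apply, TensorProduct.lift.tmul, LinearMap.mk₂_apply]

end Aux
end TTP

open TTP in
/-- separability of the twisted tensor product (Theorem 3.8 of the
paper): diagrams (12) and (13) commute iff `A ⊗_τ B` is separable with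
`Γ_{A⊗_τ B} = (1⊗τ⁻¹⊗1)∘(Γ_A⊗Γ_B)` a bimodule-morphism right inverse of its
multiplication. -/
theorem twistedTensorProduct_separable_iff
    {k A B : Type*} [Field k]
    [AddCommGroup A] [Module k A] [AddCommGroup B] [Module k B]
    (mulA : A ⊗[k] A →ₗ[k] A) (unitA : k →ₗ[k] A)
    (mulB : B ⊗[k] B →ₗ[k] B) (unitB : k →ₗ[k] B)
    (hA : IsUnitalAssoc k mulA unitA) (hB : IsUnitalAssoc k mulB unitB)
    (ΓA : A →ₗ[k] A ⊗[k] A) (ΓB : B →ₗ[k] B ⊗[k] B)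
    (hΓA : IsSeparableWith k mulA ΓA) (hΓB : IsSeparableWith k mulB ΓB)
    (τ : B ⊗[k] A ≃ₗ[k] A ⊗[k] B)
    (hτ : IsTwisting k mulA unitA mulB unitB τ.toLinearMap) :
    (MidACompat k ΓA τ.toLinearMap ∧ MidBCompat k ΓB τ.toLinearMap)
      ↔ IsSeparableWith k (tMul k mulA mulB τ.toLinearMap)
          (tComul k ΓA ΓB τ.symm.toLinearMap) := by
  obtain ⟨hA1, hA2⟩ := unital hA
  obtain ⟨hB1, hB2⟩ := unital hB
  obtain ⟨ht1, ht2, ht3⟩ := hτ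
  have hτA : ∀ b, τ (b ⊗ₜ[k] unitA 1) = unitA 1 ⊗ₜ[k] b := fun b => by
    simpa using LinearMap.congr_fun ht1 (b ⊗ₜ[k] 1)
  have hτB : ∀ a, τ (unitB 1 ⊗ₜ[k] a) = a ⊗ₜ[k] unitB 1 := fun a => by
    simpa using LinearMap.congr_fun ht2 (1 ⊗ₜ[k] a)
  have hmB : MulB mulB τ := by
    intro b f c
    have := LinearMap.congr_fun ht3 ((b ⊗ₜ[k] f) ⊗ₜ[k] (unitA 1 ⊗ₜ[k] c))
    simp only [LinearMap.comp_apply, TensorProduct.map_tmul, LinearEquiv.coe_coe, hA1,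
      midMap_tmul, hτA, auxJ_tmul] at this
    rw [this]
    generalize τ (f ⊗ₜ[k] c) = w
    induction w using TensorProduct.induction_on with
    | zero => simp
    | add x y hx hy => simp only [map_add, TensorProduct.tmul_add, hx, hy]
    | tmul c2 d1 =>
      simp only [midMap_tmul, TensorProduct.assoc_symm_tmul, TensorProduct.map_tmul,
        LinearEquiv.coe_coe, LinearMap.id_apply]
      generalize τ (b ⊗ₜ[k] c2) = r
      induction r using TensorProduct.induction_on with
      | zero => simp
      | add x y hx hy => simp only [map_add, TensorProduct.add_tmul, hx, hy]
      | tmul p q => simp [auxJ_tmul, hA1]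
  have hmA : MulA mulA τ := by
    intro b c f
    have := LinearMap.congr_fun ht3 ((b ⊗ₜ[k] unitB 1) ⊗ₜ[k] (c ⊗ₜ[k] f))
    simp only [LinearMap.comp_apply, TensorProduct.map_tmul, LinearEquiv.coe_coe, hB2,
      midMap_tmul, hτB, auxJ_tmul] at this
    rw [this]
    generalize τ (b ⊗ₜ[k] c) = w
    induction w using TensorProduct.induction_on with
    | zero => simp
    | add x y hx hy => simp only [map_add, TensorProduct.add_tmul, hx, hy]
    | tmul c2 d1 =>
      simp only [midMap_tmul, TensorProduct.assoc_tmul, TensorProduct.map_tmul,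
        LinearEquiv.coe_coe, LinearMap.id_apply]
      generalize τ (d1 ⊗ₜ[k] f) = r
      induction r using TensorProduct.induction_on with
      | zero => simp
      | add x y hx hy => simp only [map_add, TensorProduct.tmul_add, hx, hy]
      | tmul p q => simp [auxJ_tmul, hB2]
  rw [sep_iff mulA ΓA _ hA1 hA2] at hΓA
  rw [sep_iff mulB ΓB _ hB1 hB2] at hΓB
  obtain ⟨hA0, hAl, hAr⟩ := hΓA
  obtain ⟨hB0, hBl, hBr⟩ := hΓB
  have hA0' : ∀ x, mulA (ΓA x) = x := LinearMap.congr_fun hA0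
  have hB0' : ∀ x, mulB (ΓB x) = x := LinearMap.congr_fun hB0
  have hT1 : ∀ x, tMul k mulA mulB τ.toLinearMap ((unitA 1 ⊗ₜ[k] unitB 1) ⊗ₜ[k] x) = x := by
    intro x
    induction x using TensorProduct.induction_on with
    | zero => simp
    | add x y hx hy => simp only [map_add, TensorProduct.tmul_add, hx, hy]
    | tmul p q => simp [tMul_tmul, auxJ_tmul, hτB, hA1, hB1]
  have hT2 : ∀ x, tMul k mulA mulB τ.toLinearMap (x ⊗ₜ[k] (unitA 1 ⊗ₜ[k] unitB 1)) = x := by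
    intro x
    induction x using TensorProduct.induction_on with
    | zero => simp
    | add x y hx hy => simp only [map_add, TensorProduct.add_tmul, hx, hy]
    | tmul p q => simp [tMul_tmul, auxJ_tmul, hτA, hA2, hB2]
  rw [sep_iff _ _ _ hT1 hT2, midA_iff, midB_iff]
  -- the twisted maps after applying `1 ⊗ τ ⊗ 1`
  have hL : ∀ a b c d, midMap k τ.toLinearMap (tComul k ΓA ΓB τ.symm.toLinearMap
      (tMul k mulA mulB τ.toLinearMap ((a ⊗ₜ[k] b) ⊗ₜ[k] (c ⊗ₜ[k] d))))
      = auxΦ mulA mulB a (ΓB d) (TensorProduct.map ΓA LinearMap.id (τ (b ⊗ₜ[k] c))) := by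
    intro a b c d
    rw [tComul, LinearMap.comp_apply, midMap_comp_symm, tMul_tmul]
    generalize τ (b ⊗ₜ[k] c) = s
    induction s using TensorProduct.induction_on with
    | zero => simp
    | add x y hx hy => simp only [map_add, hx, hy]
    | tmul p q => simp [auxJ_tmul, auxΦ, hAl, hBl]
  have hR : ∀ a b c d, midMap k τ.toLinearMap (tComul k ΓA ΓB τ.symm.toLinearMap
      (tMul k mulA mulB τ.toLinearMap ((a ⊗ₜ[k] b) ⊗ₜ[k] (c ⊗ₜ[k] d))))
      = auxΨ mulA mulB (ΓA a) d (TensorProduct.map LinearMap.id ΓB (τ (b ⊗ₜ[k] c))) := by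
    intro a b c d
    rw [tComul, LinearMap.comp_apply, midMap_comp_symm, tMul_tmul]
    generalize τ (b ⊗ₜ[k] c) = s
    induction s using TensorProduct.induction_on with
    | zero => simp
    | add x y hx hy => simp only [map_add, hx, hy]
    | tmul p q => simp [auxJ_tmul, auxΨ, hAr, hBr]
  have hΓ : ∀ c d, tComul k ΓA ΓB τ.symm.toLinearMap (c ⊗ₜ[k] d)
      = midMap k τ.symm.toLinearMap (ΓA c ⊗ₜ[k] ΓB d) := fun c d => by simp [tComul]
  have hΦ : ∀ w, TensorProduct.map LinearMap.id mulB
      (auxΦ mulA mulB (unitA 1) (ΓB (unitB 1)) w) = w := by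
    intro w
    induction w using TensorProduct.induction_on with
    | zero => simp
    | add x y hx hy => simp only [map_add, hx, hy]
    | tmul t b => simp [auxΦ, lact_one mulA _ hA1, ← hBl, hB0', hB2]
  have hΨ : ∀ w, TensorProduct.map mulA LinearMap.id
      (auxΨ mulA mulB (ΓA (unitA 1)) (unitB 1) w) = w := by
    intro w
    induction w using TensorProduct.induction_on with
    | zero => simp
    | add x y hx hy => simp only [map_add, hx, hy]
    | tmul t b => simp [auxΨ, ract_one mulB _ hB2, ← hAr, hA0', hA1]
  constructor
  · rintro ⟨h1, h2⟩
    refine ⟨?_, ?_, ?_⟩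
    · refine TensorProduct.ext' fun a b => ?_
      simp [tMul, tComul, midMap_comp_symm, hA0', hB0']
    · intro x y
      induction x using TensorProduct.induction_on with
      | zero => simp
      | add x y hx hy => simp only [map_add, TensorProduct.add_tmul, hx, hy, LinearMap.add_apply]
      | tmul a b =>
        induction y using TensorProduct.induction_on with
        | zero => simp
        | add x y hx hy => simp only [map_add, TensorProduct.tmul_add, hx, hy]
        | tmul c d =>
          apply midMap_inj τ
          rw [hL, hΓ, keyL mulA mulB τ hmB, h1]
    · intro x y
      induction y using TensorProduct.induction_on with
      | zero => simp
      | add x y hx hy => simp only [map_add, TensorProduct.tmul_add, hx, hy, LinearMap.add_apply]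
      | tmul c d =>
        induction x using TensorProduct.induction_on with
        | zero => simp
        | add x y hx hy => simp only [map_add, TensorProduct.add_tmul, hx, hy]
        | tmul a b =>
          apply midMap_inj τ
          rw [hR, hΓ, keyR mulA mulB τ hmA, h2]
  · rintro ⟨-, h1, h2⟩
    refine ⟨fun b a => ?_, fun b a => ?_⟩
    · have := congrArg (midMap k τ.toLinearMap) (h1 (unitA 1 ⊗ₜ[k] b) (a ⊗ₜ[k] unitB 1))
      rw [hL, hΓ, keyL mulA mulB τ hmB] at this
      rw [← hΦ (TensorProduct.map ΓA LinearMap.id (τ (b ⊗ₜ[k] a))), this, hΦ]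
    · have := congrArg (midMap k τ.toLinearMap) (h2 (unitA 1 ⊗ₜ[k] b) (a ⊗ₜ[k] unitB 1))
      rw [hR, hΓ, keyR mulA mulB τ hmA] at this
      rw [← hΨ (TensorProduct.map LinearMap.id ΓB (τ (b ⊗ₜ[k] a))), this, hΨ]
end

section
/- Let (A,∇_A,η_A,Δ_A,ε_A) and (B,∇_B,η_B,Δ_B,ε_B) be Frobenius algebras over k and let τ : B⊗A → A⊗B be a twisting map satisfying the comultiplication-compatibility condition (Δ_A⊗Δ_B)∘τ = (1_A⊗τ⊗1_B)∘(τ⊗τ)∘(1_B⊗τ⊗1_A)∘(Δ_B⊗Δ_A). Then (A⊗_τ B, ∇_{A⊗_τ B}, η_{A⊗_τ B}, Δ_{A⊗_τ B}, ε_{A⊗_τ B}) is a Frobenius algebra. -/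
open scoped TensorProduct

namespace TTPAux
open TensorProduct TTP

/-- Elementwise form of a Frobenius algebra. -/
structure Fr (k A : Type*) [Field k] [AddCommGroup A] [Module k A] where
  mul : A ⊗[k] A →ₗ[k] A
  unit : k →ₗ[k] A
  comul : A →ₗ[k] A ⊗[k] A
  counit : A →ₗ[k] k
  S : Finset (A × A)
  one_mul : ∀ a, mul (unit 1 ⊗ₜ a) = a
  mul_one : ∀ a, mul (a ⊗ₜ unit 1) = a
  assoc : ∀ a b c, mul (mul (a ⊗ₜ b) ⊗ₜ c) = mul (a ⊗ₜ mul (b ⊗ₜ c))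
  comul_left : ∀ a, comul a = ∑ p ∈ S, mul (a ⊗ₜ p.1) ⊗ₜ p.2
  comul_right : ∀ a, comul a = ∑ p ∈ S, p.1 ⊗ₜ mul (p.2 ⊗ₜ a)
  counit_left : ∀ a, ∑ p ∈ S, counit p.1 • mul (p.2 ⊗ₜ a) = a
  counit_right : ∀ a, ∑ p ∈ S, counit p.2 • mul (a ⊗ₜ p.1) = a
  snake_left : ∀ a, ∑ p ∈ S, counit (mul (a ⊗ₜ p.1)) • p.2 = a
  snake_right : ∀ a, ∑ p ∈ S, counit (mul (p.2 ⊗ₜ a)) • p.1 = a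

theorem exists_fr {k A : Type*} [Field k] [AddCommGroup A] [Module k A]
    (mul : A ⊗[k] A →ₗ[k] A) (unit : k →ₗ[k] A)
    (comul : A →ₗ[k] A ⊗[k] A) (counit : A →ₗ[k] k)
    (h : IsFrobenius k mul unit comul counit) :
    ∃ F : Fr k A, F.mul = mul ∧ F.unit = unit ∧ F.comul = comul ∧ F.counit = counit := by
  obtain ⟨⟨h1, h2, h3⟩, ⟨h4, h5, h6⟩, h7, h8⟩ := h
  obtain ⟨S, hS⟩ := TensorProduct.exists_finset (comul (unit 1))
  have one_mul : ∀ a, mul (unit 1 ⊗ₜ a) = a := fun a => by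
    simpa using LinearMap.congr_fun h1 a
  have mul_one : ∀ a, mul (a ⊗ₜ unit 1) = a := fun a => by
    simpa using LinearMap.congr_fun h2 a
  have cl : ∀ a, comul a = ∑ p ∈ S, mul (a ⊗ₜ p.1) ⊗ₜ p.2 := fun a => by
    have := LinearMap.congr_fun h8 (a ⊗ₜ unit 1)
    simpa [mul_one, hS, tmul_sum] using this
  have cr : ∀ a, comul a = ∑ p ∈ S, p.1 ⊗ₜ mul (p.2 ⊗ₜ a) := fun a => by
    have := LinearMap.congr_fun h7 (unit 1 ⊗ₜ a)
    simpa [one_mul, hS, sum_tmul] using this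
  have k1 := fun a => LinearMap.congr_fun h4 a
  have k2 := fun a => LinearMap.congr_fun h5 a
  simp only [LinearMap.comp_apply] at k1 k2
  refine ⟨⟨mul, unit, comul, counit, S, one_mul, mul_one, ?_, cl, cr, ?_, ?_, ?_, ?_⟩,
    rfl, rfl, rfl, rfl⟩
  · intro a b c
    simpa using LinearMap.congr_fun h3 ((a ⊗ₜ b) ⊗ₜ c)
  · intro a; have := k1 a; rw [cr] at this; simpa using this
  · intro a; have := k2 a; rw [cl] at this; simpa using this
  · intro a; have := k1 a; rw [cl] at this; simpa using this
  · intro a; have := k2 a; rw [cr] at this; simpa using this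

/-- Two Frobenius algebras together with a twisting map. -/
structure Tw (k A B : Type*) [Field k] [AddCommGroup A] [Module k A]
    [AddCommGroup B] [Module k B] where
  FA : Fr k A
  FB : Fr k B
  τ : B ⊗[k] A ≃ₗ[k] A ⊗[k] B
  tw : IsTwisting k FA.mul FA.unit FB.mul FB.unit τ.toLinearMap
  cc : ComulCompat k FA.comul FB.comul τ.toLinearMap

namespace Tw
variable {k A B : Type*} [Field k] [AddCommGroup A] [Module k A]
    [AddCommGroup B] [Module k B] (D : Tw k A B)

theorem tau_unitA (b : B) : D.τ (b ⊗ₜ D.FA.unit 1) = D.FA.unit 1 ⊗ₜ b := by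
  simpa using LinearMap.congr_fun D.tw.1 (b ⊗ₜ 1)

theorem tau_unitB (a : A) : D.τ (D.FB.unit 1 ⊗ₜ a) = a ⊗ₜ D.FB.unit 1 := by
  simpa using LinearMap.congr_fun D.tw.2.1 (1 ⊗ₜ a)

/-- Multiplication of the twisted tensor product. -/
noncomputable def st (x y : A ⊗[k] B) : A ⊗[k] B :=
  tMul k D.FA.mul D.FB.mul D.τ.toLinearMap (x ⊗ₜ y)

theorem st_add_left (x x' y) : D.st (x + x') y = D.st x y + D.st x' y := by
  simp [st, add_tmul]
theorem st_add_right (x y y') : D.st x (y + y') = D.st x y + D.st x y' := by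
  simp [st, tmul_add]
theorem st_zero_left (y) : D.st 0 y = 0 := by simp [st]
theorem st_zero_right (x) : D.st x 0 = 0 := by simp [st]

/-- Left multiplication by an element of `A`. -/
noncomputable def l (a : A) : A ⊗[k] B →ₗ[k] A ⊗[k] B :=
  TensorProduct.map (D.FA.mul ∘ₗ TensorProduct.mk k A A a) LinearMap.id

/-- Right multiplication by an element of `B`. -/
noncomputable def r (b : B) : A ⊗[k] B →ₗ[k] A ⊗[k] B :=
  TensorProduct.map LinearMap.id (D.FB.mul ∘ₗ (TensorProduct.mk k B B).flip b)

@[simp] theorem l_tmul (a a' : A) (b : B) :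
    D.l a (a' ⊗ₜ b) = D.FA.mul (a ⊗ₜ a') ⊗ₜ b := by simp [l]
@[simp] theorem r_tmul (b : B) (a : A) (b' : B) :
    D.r b (a ⊗ₜ b') = a ⊗ₜ D.FB.mul (b' ⊗ₜ b) := by simp [r]

theorem st_tmul (a a' : A) (b b' : B) :
    D.st (a ⊗ₜ b) (a' ⊗ₜ b') = D.l a (D.r b' (D.τ (b ⊗ₜ a'))) := by
  simp only [st, tMul, midMap, LinearMap.comp_apply, LinearEquiv.coe_coe, assoc_symm_tmul,
    map_tmul, assoc_tmul, LinearMap.id_apply]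
  generalize D.τ (b ⊗ₜ a') = w
  induction w with
  | zero => simp
  | tmul u v => simp
  | add x y hx hy => simp only [tmul_add, add_tmul, map_add, *]

theorem l_r (a : A) (b : B) (w) : D.l a (D.r b w) = D.r b (D.l a w) := by
  induction w with
  | zero => simp
  | tmul u v => simp
  | add x y hx hy => simp only [map_add, *]

theorem l_one (w) : D.l (D.FA.unit 1) w = w := by
  induction w with
  | zero => simp
  | tmul u v => simp [D.FA.one_mul]
  | add x y hx hy => simp only [map_add, *]

theorem r_one (w) : D.r (D.FB.unit 1) w = w := by
  induction w with
  | zero => simp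
  | tmul u v => simp [D.FB.mul_one]
  | add x y hx hy => simp only [map_add, *]

theorem l_l (a a' : A) (w) : D.l a (D.l a' w) = D.l (D.FA.mul (a ⊗ₜ a')) w := by
  induction w with
  | zero => simp
  | tmul u v => simp [D.FA.assoc]
  | add x y hx hy => simp only [map_add, *]

theorem r_r (b b' : B) (w) : D.r b (D.r b' w) = D.r (D.FB.mul (b' ⊗ₜ b)) w := by
  induction w with
  | zero => simp
  | tmul u v => simp [D.FB.assoc]
  | add x y hx hy => simp only [map_add, *]

theorem tau_mulB (b b' : B) (a : A) :
    D.τ (D.FB.mul (b ⊗ₜ b') ⊗ₜ a) = D.st (D.FA.unit 1 ⊗ₜ b) (D.τ (b' ⊗ₜ a)) := by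
  have := LinearMap.congr_fun D.tw.2.2 ((b ⊗ₜ b') ⊗ₜ (D.FA.unit 1 ⊗ₜ a))
  simp only [LinearMap.comp_apply, map_tmul, D.FA.one_mul, LinearEquiv.coe_coe] at this
  rw [this]
  simp [midMap, tau_unitA, st, tMul]

theorem tau_mulA (b : B) (a a' : A) :
    D.τ (b ⊗ₜ D.FA.mul (a ⊗ₜ a')) = D.st (D.τ (b ⊗ₜ a)) (a' ⊗ₜ D.FB.unit 1) := by
  have := LinearMap.congr_fun D.tw.2.2 ((b ⊗ₜ D.FB.unit 1) ⊗ₜ (a ⊗ₜ a'))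
  simp only [LinearMap.comp_apply, map_tmul, D.FB.mul_one, LinearEquiv.coe_coe] at this
  rw [this]
  simp [midMap, tau_unitB, st, tMul]

theorem Q1 (a : A) (w z) : D.st (D.l a w) z = D.l a (D.st w z) := by
  induction w with
  | zero => simp [st_zero_left]
  | add x y hx hy => simp only [map_add, st_add_left, *]
  | tmul u v =>
    induction z with
    | zero => simp [st_zero_right]
    | add x y hx hy => simp only [map_add, st_add_right, *]
    | tmul p q => simp [st_tmul, l_l]

theorem Q2 (b : B) (w z) : D.st z (D.r b w) = D.r b (D.st z w) := by
  induction w with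
  | zero => simp [st_zero_right]
  | add x y hx hy => simp only [map_add, st_add_right, *]
  | tmul u v =>
    induction z with
    | zero => simp [st_zero_left]
    | add x y hx hy => simp only [map_add, st_add_left, *]
    | tmul p q => simp [st_tmul, ← l_r, r_r]

theorem F1 (a : A) (b : B) (y) : D.st (a ⊗ₜ b) y = D.l a (D.st (D.FA.unit 1 ⊗ₜ b) y) := by
  rw [← Q1, l_tmul, D.FA.mul_one]

theorem F2 (a : A) (b : B) (x) : D.st x (a ⊗ₜ b) = D.r b (D.st x (a ⊗ₜ D.FB.unit 1)) := by
  rw [← Q2, r_tmul, D.FB.one_mul]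

theorem Q3 (b : B) (w z) : D.st (D.r b w) z = D.st w (D.st (D.FA.unit 1 ⊗ₜ b) z) := by
  induction w with
  | zero => simp [st_zero_left]
  | add x y hx hy => simp only [map_add, st_add_left, *]
  | tmul u v =>
    induction z with
    | zero => simp [st_zero_right]
    | add x y hx hy => simp only [st_add_right, *]
    | tmul p q =>
      rw [r_tmul, st_tmul, tau_mulB, st_tmul, l_one, Q2, F1 D u v, l_r]

theorem Q4 (a : A) (w z) : D.st z (D.l a w) = D.st (D.st z (a ⊗ₜ D.FB.unit 1)) w := by
  induction w with
  | zero => simp [st_zero_right]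
  | add x y hx hy => simp only [map_add, st_add_right, *]
  | tmul u v =>
    induction z with
    | zero => simp [st_zero_left]
    | add x y hx hy => simp only [st_add_left, *]
    | tmul p q =>
      rw [l_tmul, st_tmul, tau_mulA, st_tmul, r_one, Q1, F2 D u v]

theorem st_assoc (x y z) : D.st (D.st x y) z = D.st x (D.st y z) := by
  induction y with
  | zero => simp [st_zero_left, st_zero_right]
  | add p q hp hq => simp only [st_add_left, st_add_right, *]
  | tmul a b => rw [F2, Q3, F1 D a b, Q4]

theorem one_st (x) : D.st (D.FA.unit 1 ⊗ₜ D.FB.unit 1) x = x := by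
  induction x with
  | zero => simp [st_zero_right]
  | add p q hp hq => simp only [st_add_right, *]
  | tmul a b => rw [st_tmul, l_one, tau_unitB, r_tmul, D.FB.one_mul]

theorem st_one (x) : D.st x (D.FA.unit 1 ⊗ₜ D.FB.unit 1) = x := by
  induction x with
  | zero => simp [st_zero_left]
  | add p q hp hq => simp only [st_add_left, *]
  | tmul a b => rw [st_tmul, r_one, tau_unitA, l_tmul, D.FA.mul_one]

/-- Moving an element of `B` past two elements of `A`. -/
noncomputable def tau2 : B ⊗[k] (A ⊗[k] A) ≃ₗ[k] (A ⊗[k] A) ⊗[k] B :=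
  (TensorProduct.assoc k B A A).symm ≪≫ₗ
    TensorProduct.congr D.τ (LinearEquiv.refl k A) ≪≫ₗ
    TensorProduct.assoc k A B A ≪≫ₗ
    TensorProduct.congr (LinearEquiv.refl k A) D.τ ≪≫ₗ
    (TensorProduct.assoc k A A B).symm

/-- Moving two elements of `B` past an element of `A`. -/
noncomputable def tau2' : (B ⊗[k] B) ⊗[k] A ≃ₗ[k] A ⊗[k] (B ⊗[k] B) :=
  (TensorProduct.assoc k B B A) ≪≫ₗ
    TensorProduct.congr (LinearEquiv.refl k B) D.τ ≪≫ₗ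
    (TensorProduct.assoc k B A B).symm ≪≫ₗ
    TensorProduct.congr D.τ (LinearEquiv.refl k B) ≪≫ₗ
    (TensorProduct.assoc k A B B)

theorem tau2_tmul (b : B) (a a' : A) : D.tau2 (b ⊗ₜ (a ⊗ₜ a')) =
    (TensorProduct.assoc k A A B).symm (TensorProduct.map LinearMap.id D.τ.toLinearMap
      (TensorProduct.assoc k A B A (D.τ (b ⊗ₜ a) ⊗ₜ a'))) := by
  simp [tau2, TensorProduct.congr]

theorem tau2'_tmul (b b' : B) (a : A) : D.tau2' ((b ⊗ₜ b') ⊗ₜ a) =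
    (TensorProduct.assoc k A B B) (TensorProduct.map D.τ.toLinearMap LinearMap.id
      ((TensorProduct.assoc k B A B).symm (b ⊗ₜ D.τ (b' ⊗ₜ a)))) := by
  simp [tau2', TensorProduct.congr]

theorem tau2_one (m) : D.tau2 (D.FB.unit 1 ⊗ₜ m) = m ⊗ₜ D.FB.unit 1 := by
  induction m with
  | zero => simp
  | add x y hx hy => simp only [map_add, add_tmul, tmul_add, *]
  | tmul a a' => simp [tau2_tmul, tau_unitB]

theorem tau2'_one (n) : D.tau2' (n ⊗ₜ D.FA.unit 1) = D.FA.unit 1 ⊗ₜ n := by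
  induction n with
  | zero => simp
  | add x y hx hy => simp only [map_add, add_tmul, tmul_add, *]
  | tmul a a' => simp [tau2'_tmul, tau_unitA]

/-- The big twist. -/
noncomputable def T : (B ⊗[k] B) ⊗[k] (A ⊗[k] A) →ₗ[k] (A ⊗[k] A) ⊗[k] (B ⊗[k] B) :=
  midMap k D.τ.toLinearMap ∘ₗ TensorProduct.map D.τ.toLinearMap D.τ.toLinearMap
    ∘ₗ midMap k D.τ.toLinearMap

/-- Apply the counit of `B` in the last slot. -/
noncomputable def eB (V : Type*) [AddCommGroup V] [Module k V] : V ⊗[k] B →ₗ[k] V :=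
  (TensorProduct.rid k V).toLinearMap ∘ₗ TensorProduct.map LinearMap.id D.FB.counit

/-- Apply the counit of `A` in the first slot. -/
noncomputable def eA (V : Type*) [AddCommGroup V] [Module k V] : A ⊗[k] V →ₗ[k] V :=
  (TensorProduct.lid k V).toLinearMap ∘ₗ TensorProduct.map D.FA.counit LinearMap.id

@[simp] theorem eB_tmul {V : Type*} [AddCommGroup V] [Module k V] (v : V) (b : B) :
    D.eB V (v ⊗ₜ b) = D.FB.counit b • v := by simp [eB]
@[simp] theorem eA_tmul {V : Type*} [AddCommGroup V] [Module k V] (v : V) (a : A) :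
    D.eA V (a ⊗ₜ v) = D.FA.counit a • v := by simp [eA]

theorem T_eB (b b' : B) (m) :
    TensorProduct.map LinearMap.id (D.eB B) (D.T ((b ⊗ₜ b') ⊗ₜ m))
      = D.tau2 (b ⊗ₜ D.eB _ (D.tau2 (b' ⊗ₜ m))) := by
  induction m with
  | zero => simp
  | add x y hx hy => simp only [map_add, tmul_add, *]
  | tmul a a' =>
    simp only [T, midMap, LinearMap.comp_apply, LinearEquiv.coe_coe, assoc_symm_tmul,
      map_tmul, assoc_tmul, LinearMap.id_apply, tau2_tmul]
    generalize D.τ (b' ⊗ₜ a) = w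
    induction w with
    | zero => simp
    | add x y hx hy => simp only [map_add, add_tmul, tmul_add, *]
    | tmul u v =>
      simp only [assoc_symm_tmul, map_tmul, assoc_tmul, LinearMap.id_apply, LinearEquiv.coe_coe]
      generalize D.τ (v ⊗ₜ a') = w
      induction w with
      | zero => simp
      | add x y hx hy => simp only [map_add, tmul_add, *]
      | tmul p q =>
        simp only [assoc_symm_tmul, eB_tmul, tmul_smul, map_smul, tau2_tmul]
        generalize D.τ (b ⊗ₜ u) = w
        induction w with
        | zero => simp
        | add x y hx hy => simp only [map_add, add_tmul, smul_add, *]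
        | tmul r s =>
          simp only [assoc_symm_tmul, map_tmul, assoc_tmul, LinearMap.id_apply,
            LinearEquiv.coe_coe]
          generalize D.τ (s ⊗ₜ p) = w
          induction w with
          | zero => simp
          | add x y hx hy => simp only [map_add, add_tmul, tmul_add, smul_add, *]
          | tmul c d => simp

theorem T_eA (a a' : A) (n) :
    TensorProduct.map (D.eA A) LinearMap.id (D.T (n ⊗ₜ (a ⊗ₜ a')))
      = D.tau2' (D.eA _ (D.tau2' (n ⊗ₜ a)) ⊗ₜ a') := by
  induction n with
  | zero => simp
  | add x y hx hy => simp only [map_add, add_tmul, *]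
  | tmul b b' =>
    simp only [T, midMap, LinearMap.comp_apply, LinearEquiv.coe_coe, assoc_symm_tmul,
      map_tmul, assoc_tmul, LinearMap.id_apply, tau2'_tmul]
    generalize D.τ (b' ⊗ₜ a) = w
    induction w with
    | zero => simp
    | add x y hx hy => simp only [map_add, add_tmul, tmul_add, *]
    | tmul u v =>
      simp only [assoc_symm_tmul, map_tmul, assoc_tmul, LinearMap.id_apply, LinearEquiv.coe_coe]
      generalize D.τ (b ⊗ₜ u) = w
      induction w with
      | zero => simp
      | add x y hx hy => simp only [map_add, add_tmul, *]
      | tmul p q =>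
        simp only [assoc_tmul, eA_tmul, smul_tmul', map_smul, tau2'_tmul]
        simp only [← smul_tmul', map_smul, tau2'_tmul]
        generalize D.τ (v ⊗ₜ a') = w
        induction w with
        | zero => simp
        | add x y hx hy => simp only [map_add, tmul_add, smul_add, *]
        | tmul r s =>
          simp only [assoc_symm_tmul, map_tmul, assoc_tmul, LinearMap.id_apply,
            LinearEquiv.coe_coe]
          generalize D.τ (q ⊗ₜ r) = w
          induction w with
          | zero => simp
          | add x y hx hy => simp only [map_add, add_tmul, tmul_add, smul_add, *]
          | tmul c d => simp [smul_tmul']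

theorem cc_apply (b : B) (a : A) :
    TensorProduct.map D.FA.comul D.FB.comul (D.τ (b ⊗ₜ a))
      = D.T (D.FB.comul b ⊗ₜ D.FA.comul a) := by
  simpa [T] using LinearMap.congr_fun D.cc (b ⊗ₜ a)

theorem eB_comul (b : B) : D.eB B (D.FB.comul b) = b := by
  rw [D.FB.comul_left]; simpa using D.FB.counit_right b

theorem eA_comul (a : A) : D.eA A (D.FA.comul a) = a := by
  rw [D.FA.comul_right]; simpa using D.FA.counit_left a

theorem eB_tau2_comul (b : B) (a : A) :
    D.eB _ (D.tau2 (b ⊗ₜ D.FA.comul a)) = D.FB.counit b • D.FA.comul a := by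
  have h := congrArg (TensorProduct.map LinearMap.id (D.eB B)) (D.cc_apply (D.FB.unit 1) a)
  rw [tau_unitB, map_tmul, map_tmul, eB_comul, D.FB.comul_left] at h
  simp only [D.FB.one_mul, sum_tmul, map_sum, T_eB, LinearMap.id_apply] at h
  rw [← map_sum, ← tau2_one] at h
  have h2 := congrArg (TensorProduct.lid k _ ∘ TensorProduct.map
    (D.FB.counit ∘ₗ D.FB.mul ∘ₗ TensorProduct.mk k B B b)
    (LinearMap.id (M := A ⊗[k] A))) (D.tau2.injective h)
  simp [D.FB.mul_one] at h2
  rw [h2]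
  conv_lhs => rw [← D.FB.snake_left b]
  simp [sum_tmul, ← smul_tmul']

theorem eA_tau2'_comul (b : B) (a : A) :
    D.eA _ (D.tau2' (D.FB.comul b ⊗ₜ a)) = D.FA.counit a • D.FB.comul b := by
  have h := congrArg (TensorProduct.map (D.eA A) LinearMap.id) (D.cc_apply b (D.FA.unit 1))
  rw [tau_unitA, map_tmul, map_tmul, eA_comul, D.FA.comul_right] at h
  simp only [D.FA.mul_one, tmul_sum, map_sum, T_eA, LinearMap.id_apply] at h
  rw [← map_sum, ← tau2'_one] at h
  have h2 := congrArg (TensorProduct.rid k _ ∘ TensorProduct.map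
    (LinearMap.id (M := B ⊗[k] B))
    (D.FA.counit ∘ₗ D.FA.mul ∘ₗ (TensorProduct.mk k A A).flip a)) (D.tau2'.injective h)
  simp [D.FA.one_mul] at h2
  rw [h2]
  conv_lhs => rw [← D.FA.snake_right a]
  simp [tmul_sum]

theorem comul_slideA (b : B) (a : A) :
    TensorProduct.map D.FA.comul LinearMap.id (D.τ (b ⊗ₜ a)) = D.tau2 (b ⊗ₜ D.FA.comul a) := by
  have h := congrArg (TensorProduct.map LinearMap.id (D.eB B)) (D.cc_apply b a)
  rw [D.FB.comul_left] at h
  simp only [sum_tmul, map_sum, T_eB, eB_tau2_comul] at h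
  simp only [← map_sum, ← smul_tmul, ← sum_tmul, D.FB.counit_right] at h
  rw [← h, ← LinearMap.comp_apply, ← TensorProduct.map_comp, LinearMap.id_comp]
  congr 2
  ext x
  exact (D.eB_comul x).symm

theorem comul_slideB (b : B) (a : A) :
    TensorProduct.map LinearMap.id D.FB.comul (D.τ (b ⊗ₜ a)) = D.tau2' (D.FB.comul b ⊗ₜ a) := by
  have h := congrArg (TensorProduct.map (D.eA A) LinearMap.id) (D.cc_apply b a)
  rw [D.FA.comul_right] at h
  simp only [tmul_sum, map_sum, T_eA, eA_tau2'_comul] at h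
  simp only [← map_sum, smul_tmul, ← tmul_sum, D.FA.counit_left] at h
  rw [← h, ← LinearMap.comp_apply, ← TensorProduct.map_comp, LinearMap.id_comp]
  congr 2
  ext x
  exact (D.eA_comul x).symm

/-- Counit compatibility for `B`. -/
theorem eB_tau (b : B) (a : A) : D.eB A (D.τ (b ⊗ₜ a)) = D.FB.counit b • a := by
  have h := congrArg (D.eB _) (D.comul_slideA b a)
  rw [eB_tau2_comul] at h
  have h2 : ∀ w : A ⊗[k] B, D.eB _ (TensorProduct.map D.FA.comul LinearMap.id w)
      = D.FA.comul (D.eB A w) := by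
    intro w
    induction w with
    | zero => simp
    | add x y hx hy => simp only [map_add, *]
    | tmul u v => simp
  rw [h2] at h
  have h3 := congrArg (D.eA A) h
  simpa [eA_comul] using h3

/-- Counit compatibility for `A`. -/
theorem eA_tau (b : B) (a : A) : D.eA B (D.τ (b ⊗ₜ a)) = D.FA.counit a • b := by
  have h := congrArg (D.eA _) (D.comul_slideB b a)
  rw [eA_tau2'_comul] at h
  have h2 : ∀ w : A ⊗[k] B, D.eA _ (TensorProduct.map LinearMap.id D.FB.comul w)
      = D.FB.comul (D.eA B w) := by
    intro w
    induction w with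
    | zero => simp
    | add x y hx hy => simp only [map_add, *]
    | tmul u v => simp
  rw [h2] at h
  have h3 := congrArg (D.eB B) h
  simpa [eB_comul] using h3

/-- The counit of the twisted tensor product. -/
noncomputable def ec : A ⊗[k] B →ₗ[k] k := tCounit k D.FA.counit D.FB.counit

theorem ec_eB (w) : D.ec w = D.FA.counit (D.eB A w) := by
  induction w with
  | zero => simp
  | add x y hx hy => simp only [map_add, *]
  | tmul u v => simp [ec, tCounit, mul_comm]

theorem ec_eA (w) : D.ec w = D.FB.counit (D.eA B w) := by
  induction w with
  | zero => simp
  | add x y hx hy => simp only [map_add, *]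
  | tmul u v => simp [ec, tCounit]

theorem eB_l (a : A) (w) : D.eB A (D.l a w) = D.FA.mul (a ⊗ₜ D.eB A w) := by
  induction w with
  | zero => simp
  | add x y hx hy => simp only [map_add, tmul_add, *]
  | tmul u v => simp

theorem eA_r (b : B) (w) : D.eA B (D.r b w) = D.FB.mul (D.eA B w ⊗ₜ b) := by
  induction w with
  | zero => simp
  | add x y hx hy => simp only [map_add, add_tmul, *]
  | tmul u v => simp [← smul_tmul']

theorem ec_left (a a' : A) (b b' : B) : D.ec (D.st (a ⊗ₜ b) (D.τ (b' ⊗ₜ a')))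
    = D.FB.counit (D.FB.mul (b ⊗ₜ b')) * D.FA.counit (D.FA.mul (a ⊗ₜ a')) := by
  rw [F1, ← tau_mulB, ec_eB, eB_l, eB_tau]
  simp

theorem ec_right (a a' : A) (b b' : B) : D.ec (D.st (D.τ (b ⊗ₜ a)) (a' ⊗ₜ b'))
    = D.FA.counit (D.FA.mul (a ⊗ₜ a')) * D.FB.counit (D.FB.mul (b ⊗ₜ b')) := by
  rw [F2, ← tau_mulA, ec_eA, eA_r, eA_tau]
  simp [← smul_tmul', smul_eq_mul]

/-- Pair the last slot against `x`. -/
noncomputable def _root_.TTPAux.pr {k C : Type*} [Field k] [AddCommGroup C] [Module k C]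
    (mul : C ⊗[k] C →ₗ[k] C) (counit : C →ₗ[k] k)
    (V : Type*) [AddCommGroup V] [Module k V] (x : C) : V ⊗[k] C →ₗ[k] V :=
  (TensorProduct.rid k V).toLinearMap ∘ₗ TensorProduct.map LinearMap.id
    (counit ∘ₗ mul ∘ₗ (TensorProduct.mk k C C).flip x)

@[simp] theorem _root_.TTPAux.pr_tmul {k C : Type*} [Field k] [AddCommGroup C] [Module k C]
    (mul : C ⊗[k] C →ₗ[k] C) (counit : C →ₗ[k] k)
    (V : Type*) [AddCommGroup V] [Module k V] (x : C) (v : V) (c : C) :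
    pr mul counit V x (v ⊗ₜ c) = counit (mul (c ⊗ₜ x)) • v := by simp [pr]

theorem _root_.TTPAux.pr_add {k C : Type*} [Field k] [AddCommGroup C] [Module k C]
    (mul : C ⊗[k] C →ₗ[k] C) (counit : C →ₗ[k] k)
    (V : Type*) [AddCommGroup V] [Module k V] (x y : C) (w : V ⊗[k] C) :
    pr mul counit V (x + y) w = pr mul counit V x w + pr mul counit V y w := by
  induction w with
  | zero => simp
  | add x y hx hy => simp only [map_add, *]; abel
  | tmul u v => simp [tmul_add, add_smul]

theorem _root_.TTPAux.pr_zero {k C : Type*} [Field k] [AddCommGroup C] [Module k C]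
    (mul : C ⊗[k] C →ₗ[k] C) (counit : C →ₗ[k] k)
    (V : Type*) [AddCommGroup V] [Module k V] (w : V ⊗[k] C) :
    pr mul counit V 0 w = 0 := by
  induction w with
  | zero => simp
  | add x y hx hy => simp only [map_add, *]; simp
  | tmul u v => simp

theorem pair_mid (a' : A) (b' : B) (c f : A) (g h : B) :
    pr (tMul k D.FA.mul D.FB.mul D.τ.toLinearMap) D.ec (A ⊗[k] B) (D.τ (b' ⊗ₜ a'))
      (midMap k D.τ.symm.toLinearMap ((c ⊗ₜ f) ⊗ₜ (g ⊗ₜ h)))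
      = D.FB.counit (D.FB.mul (h ⊗ₜ b')) •
        (c ⊗ₜ D.eA B (D.st (f ⊗ₜ g) (a' ⊗ₜ D.FB.unit 1))) := by
  obtain ⟨w, hw⟩ := D.τ.surjective (f ⊗ₜ g)
  simp only [midMap, LinearMap.comp_apply, LinearEquiv.coe_coe, assoc_symm_tmul,
    map_tmul, assoc_tmul, LinearMap.id_apply]
  rw [← hw, LinearEquiv.symm_apply_apply]
  clear hw
  induction w with
  | zero => simp [st_zero_left]
  | add x y hx hy => simp only [map_add, tmul_add, add_tmul, st_add_left, smul_add, *]
  | tmul u v =>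
    have := D.ec_left v a' h b'
    rw [st] at this
    rw [← tau_mulA, eA_tau]
    simp [this, mul_smul]

theorem sum_l (a : A) (w) :
    ∑ p ∈ D.FA.S, D.FA.mul (a ⊗ₜ p.1) ⊗ₜ[k] D.eA B (D.l p.2 w) = D.l a w := by
  induction w with
  | zero => simp
  | add x y hx hy => simp only [map_add, tmul_add, Finset.sum_add_distrib, *]
  | tmul u v =>
    simp only [l_tmul, eA_tmul]
    conv_rhs => rw [← D.FA.snake_right u]
    simp only [tmul_sum, sum_tmul, tmul_smul, map_sum, map_smul, ← smul_tmul']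

theorem pair_comul (x y : A ⊗[k] B) :
    pr (tMul k D.FA.mul D.FB.mul D.τ.toLinearMap) D.ec (A ⊗[k] B) x
      (tComul k D.FA.comul D.FB.comul D.τ.symm.toLinearMap y) = D.st y x := by
  induction y with
  | zero => simp [st_zero_left]
  | add y y' hx hy => simp only [map_add, st_add_left, *]
  | tmul a b =>
    obtain ⟨x, rfl⟩ := D.τ.surjective x
    induction x with
    | zero => simp [st_zero_right, pr_zero]
    | add y y' hx hy => simp only [map_add, pr_add, st_add_right, *]
    | tmul b' a' =>
      rw [tComul, LinearMap.comp_apply, map_tmul, D.FA.comul_left, D.FB.comul_left]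
      simp only [sum_tmul, tmul_sum, map_sum, pair_mid]
      rw [Finset.sum_comm]
      have key : ∀ p : A × A, ∑ q ∈ D.FB.S, D.FB.counit (D.FB.mul (q.2 ⊗ₜ b')) •
          (D.FA.mul (a ⊗ₜ p.1)) ⊗ₜ[k] D.eA B
            (D.st (p.2 ⊗ₜ D.FB.mul (b ⊗ₜ q.1)) (a' ⊗ₜ D.FB.unit 1))
          = D.FA.mul (a ⊗ₜ p.1) ⊗ₜ[k] D.eA B (D.l p.2 (D.τ (D.FB.mul (b ⊗ₜ b') ⊗ₜ a'))) := by
        intro p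
        simp only [st_tmul, r_one]
        conv_rhs => rw [← D.FB.snake_right b']
        simp only [tmul_sum, sum_tmul, tmul_smul, map_sum, map_smul, ← smul_tmul']
      rw [Finset.sum_congr rfl (fun p _ => key p)]
      rw [sum_l, F1, tau_mulB]

theorem nondeg : ∃ (S : Finset ((A × A) × (B × B)))
    (f g : (A × A) × (B × B) → A ⊗[k] B), ∀ z,
    ∑ i ∈ S, D.ec (tMul k D.FA.mul D.FB.mul D.τ.toLinearMap (z ⊗ₜ f i)) • g i = z := by
  refine ⟨D.FA.S ×ˢ D.FB.S, fun i => i.1.1 ⊗ₜ i.2.1, fun i => D.τ (i.2.2 ⊗ₜ i.1.2), ?_⟩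
  intro z
  obtain ⟨z, rfl⟩ := D.τ.surjective z
  induction z with
  | zero => simp
  | add y y' hx hy =>
    simp only [map_add, add_tmul, add_smul, Finset.sum_add_distrib, *]
  | tmul b a =>
    have h := fun i : (A × A) × (B × B) => D.ec_right a i.1.1 b i.2.1
    simp only [st] at h
    simp only [h]
    conv_rhs => rw [← D.FA.snake_left a, ← D.FB.snake_left b]
    rw [Finset.sum_product]
    simp only [tmul_sum, sum_tmul, tmul_smul, map_sum, map_smul, ← smul_tmul', mul_smul,
      Finset.smul_sum]

end Tw

section Abstract
variable {k C : Type*} [Field k] [AddCommGroup C] [Module k C]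

theorem pr_sep {ι : Type*} (mul : C ⊗[k] C →ₗ[k] C) (counit : C →ₗ[k] k)
    (S : Finset ι) (f g : ι → C)
    (hS : ∀ z, ∑ i ∈ S, counit (mul (z ⊗ₜ f i)) • g i = z)
    (V : Type*) [AddCommGroup V] [Module k V] (δ δ' : V ⊗[k] C)
    (h : ∀ x, pr mul counit V x δ = pr mul counit V x δ') : δ = δ' := by
  have key : ∀ δ : V ⊗[k] C, ∑ i ∈ S, pr mul counit V (f i) δ ⊗ₜ[k] g i = δ := by
    intro δ
    induction δ with
    | zero => simp
    | add x y hx hy => simp only [map_add, add_tmul, Finset.sum_add_distrib, *]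
    | tmul v c =>
      conv_rhs => rw [← hS c]
      simp only [pr_tmul, tmul_sum, tmul_smul, smul_tmul']
  rw [← key δ, ← key δ']
  simp only [h]

set_option maxHeartbeats 2000000 in
theorem abstract_frobenius {ι : Type*} (mul : C ⊗[k] C →ₗ[k] C) (unit : k →ₗ[k] C)
    (comul : C →ₗ[k] C ⊗[k] C) (counit : C →ₗ[k] k)
    (assoc : ∀ a b c, mul (mul (a ⊗ₜ b) ⊗ₜ c) = mul (a ⊗ₜ mul (b ⊗ₜ c)))
    (one_mul : ∀ a, mul (unit 1 ⊗ₜ a) = a) (mul_one : ∀ a, mul (a ⊗ₜ unit 1) = a)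
    (S : Finset ι) (f g : ι → C)
    (hS : ∀ z, ∑ i ∈ S, counit (mul (z ⊗ₜ f i)) • g i = z)
    (hP : ∀ x y, pr mul counit C x (comul y) = mul (y ⊗ₜ x)) :
    IsFrobenius k mul unit comul counit := by
  have sep := fun (V : Type _) [AddCommGroup V] [Module k V] => pr_sep mul counit S f g hS V
  -- right module property
  have pr_right : ∀ (y x : C) (w : C ⊗[k] C), pr mul counit C x
      (TensorProduct.map LinearMap.id (mul ∘ₗ (TensorProduct.mk k C C).flip y) w)
      = pr mul counit C (mul (y ⊗ₜ x)) w := by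
    intro y x w
    induction w with
    | zero => simp
    | add x y hx hy => simp only [map_add, *]
    | tmul u v => simp [assoc]
  have pr_left : ∀ (y x : C) (w : C ⊗[k] C), pr mul counit C x
      (TensorProduct.map (mul ∘ₗ TensorProduct.mk k C C y) LinearMap.id w)
      = mul (y ⊗ₜ pr mul counit C x w) := by
    intro y x w
    induction w with
    | zero => simp
    | add x y hx hy => simp only [map_add, tmul_add, *]
    | tmul u v => simp
  have hR : ∀ x y, comul (mul (x ⊗ₜ y))
      = TensorProduct.map LinearMap.id (mul ∘ₗ (TensorProduct.mk k C C).flip y) (comul x) := by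
    intro x y
    apply sep
    intro z
    rw [hP, pr_right, hP, assoc]
  have hL : ∀ x y, comul (mul (x ⊗ₜ y))
      = TensorProduct.map (mul ∘ₗ TensorProduct.mk k C C x) LinearMap.id (comul y) := by
    intro x y
    apply sep
    intro z
    rw [hP, pr_left, hP, assoc]
  have inj : ∀ u v : C, (∀ x, counit (mul (u ⊗ₜ x)) = counit (mul (v ⊗ₜ x))) → u = v := by
    intro u v h
    rw [← hS u, ← hS v]
    simp only [h]
  refine ⟨⟨?_, ?_, ?_⟩, ⟨?_, ?_, ?_⟩, ?_, ?_⟩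
  · ext a; simp [one_mul]
  · ext a; simp [mul_one]
  · ext a b c; simp [assoc]
  · ext y
    apply inj
    intro x
    have h : ∀ w : C ⊗[k] C, counit (mul (((TensorProduct.lid k C)
        (TensorProduct.map counit LinearMap.id w)) ⊗ₜ x)) = counit (pr mul counit C x w) := by
      intro w
      induction w with
      | zero => simp
      | add x y hx hy => simp only [map_add, add_tmul, *]
      | tmul u v => simp [← smul_tmul', mul_comm]
    simp only [LinearMap.comp_apply, LinearEquiv.coe_coe, h, hP, LinearMap.id_apply]
  · ext y
    have h : ∀ w : C ⊗[k] C, (TensorProduct.rid k C)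
        (TensorProduct.map LinearMap.id counit w) = pr mul counit C (unit 1) w := by
      intro w
      induction w with
      | zero => simp
      | add x y hx hy => simp only [map_add, *]
      | tmul u v => simp [mul_one]
    simp only [LinearMap.comp_apply, LinearEquiv.coe_coe, h, hP, LinearMap.id_apply, mul_one]
  · ext y
    apply sep
    intro x
    have h1 : ∀ w : C ⊗[k] C, pr mul counit (C ⊗[k] C) x
        (TensorProduct.map comul LinearMap.id w) = comul (pr mul counit C x w) := by
      intro w
      induction w with
      | zero => simp
      | add x y hx hy => simp only [map_add, *]
      | tmul u v => simp
    have h3 : ∀ (u : C) (w : C ⊗[k] C), pr mul counit (C ⊗[k] C) x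
        ((TensorProduct.assoc k C C C).symm (u ⊗ₜ w)) = u ⊗ₜ pr mul counit C x w := by
      intro u w
      induction w with
      | zero => simp
      | add x y hx hy => simp only [map_add, tmul_add, *]
      | tmul p q => simp
    have h2 : ∀ w : C ⊗[k] C, pr mul counit (C ⊗[k] C) x
        ((TensorProduct.assoc k C C C).symm (TensorProduct.map LinearMap.id comul w))
        = TensorProduct.map LinearMap.id (mul ∘ₗ (TensorProduct.mk k C C).flip x) w := by
      intro w
      induction w with
      | zero => simp
      | add x y hx hy => simp only [map_add, *]
      | tmul u v => simp [h3, hP]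
    simp only [LinearMap.comp_apply, LinearEquiv.coe_coe, h1, h2, hP, hR]
  · ext x y
    have h : ∀ w : C ⊗[k] C,
        TensorProduct.map LinearMap.id (mul ∘ₗ (TensorProduct.mk k C C).flip y) w
        = TensorProduct.map LinearMap.id mul ((TensorProduct.assoc k C C C) (w ⊗ₜ y)) := by
      intro w
      induction w with
      | zero => simp
      | add x y hx hy => simp only [map_add, add_tmul, *]
      | tmul u v => simp
    simp [hR, h]
  · ext x y
    have h : ∀ w : C ⊗[k] C,
        TensorProduct.map (mul ∘ₗ TensorProduct.mk k C C x) LinearMap.id w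
        = TensorProduct.map mul LinearMap.id ((TensorProduct.assoc k C C C).symm (x ⊗ₜ w)) := by
      intro w
      induction w with
      | zero => simp
      | add x y hx hy => simp only [map_add, tmul_add, *]
      | tmul u v => simp
    simp [hL, h]

end Abstract
end TTPAux

open TTP in
/-- Theorem 5.1 of the paper: the twisted tensor product of
Frobenius algebras, along a twisting map compatible with the comultiplications,
is a Frobenius algebra. -/
theorem twistedTensorProduct_isFrobenius
    {k A B : Type*} [Field k]
    [AddCommGroup A] [Module k A] [AddCommGroup B] [Module k B]
    (mulA : A ⊗[k] A →ₗ[k] A) (unitA : k →ₗ[k] A)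
    (comulA : A →ₗ[k] A ⊗[k] A) (counitA : A →ₗ[k] k)
    (mulB : B ⊗[k] B →ₗ[k] B) (unitB : k →ₗ[k] B)
    (comulB : B →ₗ[k] B ⊗[k] B) (counitB : B →ₗ[k] k)
    (hA : IsFrobenius k mulA unitA comulA counitA)
    (hB : IsFrobenius k mulB unitB comulB counitB)
    (τ : B ⊗[k] A ≃ₗ[k] A ⊗[k] B)
    (hτ : IsTwisting k mulA unitA mulB unitB τ.toLinearMap)
    (hcompat : ComulCompat k comulA comulB τ.toLinearMap) :
    IsFrobenius k (tMul k mulA mulB τ.toLinearMap) (tUnit k unitA unitB)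
      (tComul k comulA comulB τ.symm.toLinearMap) (tCounit k counitA counitB) := by
  obtain ⟨FA, rfl, rfl, rfl, rfl⟩ := TTPAux.exists_fr mulA unitA comulA counitA hA
  obtain ⟨FB, rfl, rfl, rfl, rfl⟩ := TTPAux.exists_fr mulB unitB comulB counitB hB
  let D : TTPAux.Tw k A B := ⟨FA, FB, τ, hτ, hcompat⟩
  obtain ⟨S, f, g, hS⟩ := D.nondeg
  have hu : tUnit k FA.unit FB.unit 1 = FA.unit 1 ⊗ₜ FB.unit 1 := by
    simp [tUnit]
  refine TTPAux.abstract_frobenius _ _ _ _ D.st_assoc ?_ ?_ S f g hS D.pair_comul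
  · intro a
    rw [hu]
    exact D.one_st a
  · intro a
    rw [hu]
    exact D.st_one a
end

section
/- Let Λ be a unital associative k-algebra, and let A and B be k-subalgebras of Λ via injective k-algebra morphisms ι_A : A → Λ and ι_B : B → Λ such that the linear map ∇_Λ∘(ι_A⊗ι_B) : A⊗B → Λ is an isomorphism of k-vector spaces. Suppose A and B carry Frobenius algebra structures and the map τ = (∇_Λ∘(ι_A⊗ι_B))^{-1}∘∇_Λ∘(ι_B⊗ι_A) : B⊗A → A⊗B satisfies the comultiplication-compatibility condition (Δ_A⊗Δ_B)∘τ = (1_A⊗τ⊗1_B)∘(τ⊗τ)∘(1_B⊗τ⊗1_A)∘(Δ_B⊗Δ_A). Then Λ is self-injective, i.e. Λ is injective as a module over itself. -/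
open scoped TensorProduct

namespace TTPAux

section
variable {k : Type*} [Field k]
variable {X P Q Y R S : Type*}
  [AddCommGroup X] [Module k X] [AddCommGroup P] [Module k P]
  [AddCommGroup Q] [Module k Q] [AddCommGroup Y] [Module k Y]
  [AddCommGroup R] [Module k R] [AddCommGroup S] [Module k S]

lemma midMap_tmul (f : P ⊗[k] Q →ₗ[k] R ⊗[k] S) (x : X) (p : P) (q : Q) (y : Y) :
    TTP.midMap k f ((x ⊗ₜ p) ⊗ₜ (q ⊗ₜ y))
      = TensorProduct.map (TensorProduct.mk k X R x) ((TensorProduct.mk k S Y).flip y)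
          (f (p ⊗ₜ q)) := by
  simp only [TTP.midMap, LinearMap.comp_apply, LinearEquiv.coe_coe,
    TensorProduct.assoc_symm_tmul, TensorProduct.map_tmul, TensorProduct.assoc_tmul,
    LinearMap.id_apply]
  induction f (p ⊗ₜ[k] q) using TensorProduct.induction_on with
  | zero => simp
  | tmul r s => simp
  | add u v hu hv => simp only [TensorProduct.tmul_add, TensorProduct.add_tmul, map_add, hu, hv]

lemma ext4 {M : Type*} [AddCommGroup M] [Module k M]
    {f g : (X ⊗[k] P) ⊗[k] (Q ⊗[k] Y) →ₗ[k] M}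
    (h : ∀ x p q y, f ((x ⊗ₜ p) ⊗ₜ (q ⊗ₜ y)) = g ((x ⊗ₜ p) ⊗ₜ (q ⊗ₜ y))) : f = g := by
  apply TensorProduct.ext
  apply TensorProduct.ext
  ext x p : 2
  apply TensorProduct.ext
  ext q y
  exact h x p q y

lemma midMap_leftInv (f : P ⊗[k] Q →ₗ[k] R ⊗[k] S) (g : R ⊗[k] S →ₗ[k] P ⊗[k] Q)
    (h : ∀ z, g (f z) = z) (w : (X ⊗[k] P) ⊗[k] (Q ⊗[k] Y)) :
    TTP.midMap k g (TTP.midMap k f w) = w := by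
  suffices H : TTP.midMap k g ∘ₗ TTP.midMap k f
      = (LinearMap.id : (X ⊗[k] P) ⊗[k] (Q ⊗[k] Y) →ₗ[k] _) from
    congrArg (fun t => t w) H
  apply ext4
  intro x p q y
  rw [LinearMap.comp_apply, midMap_tmul]
  have : ∀ z : R ⊗[k] S, TTP.midMap k g (TensorProduct.map (TensorProduct.mk k X R x)
      ((TensorProduct.mk k S Y).flip y) z)
      = TensorProduct.map (TensorProduct.mk k X P x) ((TensorProduct.mk k Q Y).flip y) (g z) := by
    intro z
    induction z using TensorProduct.induction_on with
    | zero => simp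
    | tmul r s => simp [midMap_tmul]
    | add u v hu hv => simp only [map_add, hu, hv]
  rw [this, h]
  simp

/-- contraction of outer factors -/
noncomputable def contr (f : X →ₗ[k] k) (g : Y →ₗ[k] k) :
    (X ⊗[k] P) ⊗[k] (Q ⊗[k] Y) →ₗ[k] P ⊗[k] Q :=
  TensorProduct.map ((TensorProduct.lid k P).toLinearMap ∘ₗ TensorProduct.map f LinearMap.id)
    ((TensorProduct.rid k Q).toLinearMap ∘ₗ TensorProduct.map LinearMap.id g)

lemma contr_midMap (t : P ⊗[k] Q →ₗ[k] R ⊗[k] S) (f : X →ₗ[k] k) (g : Y →ₗ[k] k)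
    (w : (X ⊗[k] P) ⊗[k] (Q ⊗[k] Y)) :
    contr f g (TTP.midMap k t w) = t (contr f g w) := by
  suffices H : contr f g ∘ₗ TTP.midMap k t = t ∘ₗ contr f g from
    congrArg (fun t => t w) H
  apply ext4
  intro x p q y
  rw [LinearMap.comp_apply, LinearMap.comp_apply, midMap_tmul]
  have : ∀ z : R ⊗[k] S, contr f g (TensorProduct.map (TensorProduct.mk k X R x)
      ((TensorProduct.mk k S Y).flip y) z) = f x • g y • z := by
    intro z
    induction z using TensorProduct.induction_on with
    | zero => simp
    | tmul r s =>
      simp [contr, TensorProduct.smul_tmul', TensorProduct.tmul_smul, smul_comm (g y) (f x)]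
    | add u v hu hv => simp only [map_add, hu, hv, smul_add]
  rw [this]
  simp only [contr, TensorProduct.map_tmul, LinearMap.comp_apply, LinearEquiv.coe_coe,
    TensorProduct.lid_tmul, TensorProduct.rid_tmul, LinearMap.id_apply,
    TensorProduct.tmul_smul, ← TensorProduct.smul_tmul', map_smul]
  rw [smul_comm]
end

section Frob
variable {k : Type*} [Field k] {A : Type*} [AddCommGroup A] [Module k A]
  {mul : A ⊗[k] A →ₗ[k] A} {unit : k →ₗ[k] A} {comul : A →ₗ[k] A ⊗[k] A} {counit : A →ₗ[k] k}

lemma frob_one_mul (h : TTP.IsFrobenius k mul unit comul counit) (a : A) :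
    mul (unit 1 ⊗ₜ a) = a := by
  have := congrArg (fun t => t a) h.1.1
  simpa using this

lemma frob_mul_one (h : TTP.IsFrobenius k mul unit comul counit) (a : A) :
    mul (a ⊗ₜ unit 1) = a := by
  have := congrArg (fun t => t a) h.1.2.1
  simpa using this

lemma frob_L (h : TTP.IsFrobenius k mul unit comul counit) (a : A) :
    comul a = TensorProduct.map (mul ∘ₗ TensorProduct.mk k A A a) LinearMap.id
      (comul (unit 1)) := by
  have := congrArg (fun t => t (a ⊗ₜ unit 1)) h.2.2.2
  simp only [LinearMap.comp_apply, frob_mul_one h, TensorProduct.map_tmul, LinearEquiv.coe_coe,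
    LinearMap.id_apply] at this
  rw [this]
  induction comul (unit 1) using TensorProduct.induction_on with
  | zero => simp
  | tmul r s => simp
  | add u v hu hv => simp only [TensorProduct.tmul_add, map_add, hu, hv]

lemma frob_R (h : TTP.IsFrobenius k mul unit comul counit) (a : A) :
    comul a = TensorProduct.map LinearMap.id (mul ∘ₗ (TensorProduct.mk k A A).flip a)
      (comul (unit 1)) := by
  have := congrArg (fun t => t (unit 1 ⊗ₜ a)) h.2.2.1
  simp only [LinearMap.comp_apply, frob_one_mul h, TensorProduct.map_tmul, LinearEquiv.coe_coe,
    LinearMap.id_apply] at this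
  rw [this]
  induction comul (unit 1) using TensorProduct.induction_on with
  | zero => simp
  | tmul r s => simp
  | add u v hu hv => simp only [TensorProduct.add_tmul, map_add, hu, hv]

lemma frob_cl (h : TTP.IsFrobenius k mul unit comul counit) (a : A) :
    TensorProduct.lid k A (TensorProduct.map counit LinearMap.id (comul a)) = a :=
  congrArg (fun t => t a) h.2.1.1

lemma frob_cr (h : TTP.IsFrobenius k mul unit comul counit) (a : A) :
    TensorProduct.rid k A (TensorProduct.map LinearMap.id counit (comul a)) = a :=
  congrArg (fun t => t a) h.2.1.2.1

lemma frob_cl' (h : TTP.IsFrobenius k mul unit comul counit) (a : A) :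
    TensorProduct.lid k A (TensorProduct.map (counit ∘ₗ mul ∘ₗ TensorProduct.mk k A A a)
      LinearMap.id (comul (unit 1))) = a := by
  conv_rhs => rw [← frob_cl h a, frob_L h a]
  induction comul (unit 1) using TensorProduct.induction_on with
  | zero => simp
  | tmul r s => simp
  | add u v hu hv => simp only [map_add, hu, hv]

lemma frob_cr' (h : TTP.IsFrobenius k mul unit comul counit) (a : A) :
    TensorProduct.rid k A (TensorProduct.map LinearMap.id
      (counit ∘ₗ mul ∘ₗ (TensorProduct.mk k A A).flip a) (comul (unit 1))) = a := by
  conv_rhs => rw [← frob_cr h a, frob_R h a]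
  induction comul (unit 1) using TensorProduct.induction_on with
  | zero => simp
  | tmul r s => simp
  | add u v hu hv => simp only [map_add, hu, hv]

lemma frob_finite (h : TTP.IsFrobenius k mul unit comul counit) : Module.Finite k A := by
  have key : ∀ e : A ⊗[k] A, ∃ N : Submodule k A, N.FG ∧ ∀ f : A →ₗ[k] k,
      TensorProduct.lid k A (TensorProduct.map f LinearMap.id e) ∈ N := by
    intro e
    induction e using TensorProduct.induction_on with
    | zero => exact ⟨⊥, Submodule.fg_bot, fun f => by simp⟩
    | tmul r s =>
      refine ⟨k ∙ s, Submodule.fg_span_singleton s, fun f => ?_⟩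
      simpa using Submodule.smul_mem _ _ (Submodule.mem_span_singleton_self s)
    | add u v hu hv =>
      obtain ⟨N, hN, hN'⟩ := hu
      obtain ⟨M, hM, hM'⟩ := hv
      refine ⟨N ⊔ M, hN.sup hM, fun f => ?_⟩
      rw [map_add, map_add]
      exact add_mem (Submodule.mem_sup_left (hN' f)) (Submodule.mem_sup_right (hM' f))
  obtain ⟨N, hN, hN'⟩ := key (comul (unit 1))
  have : N = ⊤ := by
    rw [eq_top_iff]
    intro a _
    rw [← frob_cl' h a]
    exact hN' _
  exact ⟨this ▸ hN⟩

end Frob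

section Casimir
variable {k Λ : Type*} [Field k] [Ring Λ] [Algebra k Λ]

/-- left multiplication on the left leg -/
noncomputable abbrev lft (x : Λ) : Λ ⊗[k] Λ →ₗ[k] Λ ⊗[k] Λ :=
  TensorProduct.map (LinearMap.mulLeft k x) LinearMap.id

/-- right multiplication on the right leg -/
noncomputable abbrev rgt (x : Λ) : Λ ⊗[k] Λ →ₗ[k] Λ ⊗[k] Λ :=
  TensorProduct.map LinearMap.id (LinearMap.mulRight k x)

lemma injective_of_casimir (e : Λ ⊗[k] Λ) (hc : ∀ x, lft x e = rgt x e) (μ : Λ →ₗ[k] k)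
    (hμ : TensorProduct.rid k Λ (TensorProduct.map LinearMap.id μ e) = 1) :
    Module.Injective Λ Λ := by
  apply Module.Baer.injective
  intro I g
  let J : Submodule k Λ := I.restrictScalars k
  let g' : J →ₗ[k] Λ := g.restrictScalars k
  obtain ⟨h, hh⟩ := LinearMap.exists_extend (p := J) (μ ∘ₗ g')
  have hh' : ∀ (x : Λ) (hx : x ∈ I), h x = μ (g ⟨x, hx⟩) := fun x hx =>
    congrArg (fun t => t (⟨x, hx⟩ : J)) hh
  -- the extension
  let T : (Λ →ₗ[k] k) → Λ ⊗[k] Λ → Λ := fun f z =>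
    TensorProduct.rid k Λ (TensorProduct.map LinearMap.id f z)
  have hTl : ∀ f x z, T f (lft x z) = x * T f z := by
    intro f x z
    induction z using TensorProduct.induction_on with
    | zero => simp [T]
    | tmul r s => simp [T]
    | add u v hu hv => simp only [T, map_add, mul_add] at *; rw [hu, hv]
  have hTr : ∀ f x z, T f (rgt x z) = T (f ∘ₗ LinearMap.mulRight k x) z := by
    intro f x z
    induction z using TensorProduct.induction_on with
    | zero => simp [T]
    | tmul r s => simp [T]
    | add u v hu hv => simp only [T, map_add] at *; rw [hu, hv]
  refine ⟨{ toFun := fun y => T h (rgt y e), map_add' := ?_, map_smul' := ?_ }, ?_⟩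
  · intro x y
    rw [← hc, ← hc, ← hc, hTl, hTl, hTl, add_mul]
  · intro x y
    rw [← hc, ← hc, hTl, hTl]
    simp [mul_assoc]
  · intro x hx
    change T h (rgt x e) = _
    have h1 : ∀ z : Λ ⊗[k] Λ, T h (rgt x z) = T μ (rgt (g ⟨x, hx⟩) z) := by
      intro z
      induction z using TensorProduct.induction_on with
      | zero => simp [T]
      | tmul r s =>
        have h2 : h (s * x) = μ (s * g ⟨x, hx⟩) := by
          rw [hh' _ (I.mul_mem_left s hx)]
          congr 1
          exact g.map_smul s ⟨x, hx⟩
        simp [T, h2]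
      | add u v hu hv => simp only [T, map_add] at *; rw [hu, hv]
    rw [h1, ← hc, hTl]
    change _ * TensorProduct.rid k Λ _ = _
    rw [hμ, mul_one]

end Casimir

section Legs
variable {k Λ : Type*} [Field k] [Ring Λ] [Algebra k Λ]
  {A B : Type*} [AddCommGroup A] [Module k A] [AddCommGroup B] [Module k B]

/-- multiplication of two legs -/
noncomputable abbrev mm (ιA : A →ₗ[k] Λ) (ιB : B →ₗ[k] Λ) : A ⊗[k] B →ₗ[k] Λ :=
  LinearMap.mul' k Λ ∘ₗ TensorProduct.map ιA ιB

lemma legs (ιA : A →ₗ[k] Λ) (ιB : B →ₗ[k] Λ) (σ : A ⊗[k] B →ₗ[k] B ⊗[k] A)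
    (x y : Λ) (f : A →ₗ[k] A) (g : B →ₗ[k] B)
    (hf : ∀ a, ιA (f a) = x * ιA a) (hg : ∀ b, ιB (g b) = ιB b * y)
    (s : A ⊗[k] A) (t : B ⊗[k] B) :
    TensorProduct.map (mm ιA ιB) (mm ιA ιB) (TTP.midMap k σ
      (TensorProduct.map f LinearMap.id s ⊗ₜ TensorProduct.map LinearMap.id g t))
    = lft x (rgt y (TensorProduct.map (mm ιA ιB) (mm ιA ιB) (TTP.midMap k σ (s ⊗ₜ t)))) := by
  induction s using TensorProduct.induction_on with
  | zero => simp
  | add u v hu hv => simp only [TensorProduct.add_tmul, map_add, hu, hv]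
  | tmul a1 a2 =>
    induction t using TensorProduct.induction_on with
    | zero => simp
    | add u v hu hv => simp only [TensorProduct.tmul_add, map_add, hu, hv]
    | tmul b1 b2 =>
      simp only [TensorProduct.map_tmul, LinearMap.id_apply, midMap_tmul]
      induction σ (a2 ⊗ₜ b1) using TensorProduct.induction_on with
      | zero => simp
      | add u v hu hv => simp only [map_add, hu, hv]
      | tmul p q => simp [hf, hg, mul_assoc]

end Legs

end TTPAux

open TTP in
/-- Corollary 5.5 of the paper, criterion for self-injectivity:
if `Λ` factors as a vector space as a product of two Frobenius subalgebras `A`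
and `B`, and the induced map `τ = (∇_Λ(ι_A⊗ι_B))⁻¹ ∘ ∇_Λ ∘ (ι_B⊗ι_A)` is
compatible with the comultiplications, then `Λ` is self-injective. -/
theorem selfInjective_criterion
    {k Λ A B : Type*} [Field k] [Ring Λ] [Algebra k Λ]
    [AddCommGroup A] [Module k A] [AddCommGroup B] [Module k B]
    (mulA : A ⊗[k] A →ₗ[k] A) (unitA : k →ₗ[k] A)
    (comulA : A →ₗ[k] A ⊗[k] A) (counitA : A →ₗ[k] k)
    (mulB : B ⊗[k] B →ₗ[k] B) (unitB : k →ₗ[k] B)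
    (comulB : B →ₗ[k] B ⊗[k] B) (counitB : B →ₗ[k] k)
    (hA : IsFrobenius k mulA unitA comulA counitA)
    (hB : IsFrobenius k mulB unitB comulB counitB)
    (ιA : A →ₗ[k] Λ) (ιB : B →ₗ[k] Λ)
    (hιAinj : Function.Injective ιA) (hιBinj : Function.Injective ιB)
    (hιAmul : ιA ∘ₗ mulA = LinearMap.mul' k Λ ∘ₗ TensorProduct.map ιA ιA)
    (hιAunit : ιA ∘ₗ unitA = Algebra.linearMap k Λ)
    (hιBmul : ιB ∘ₗ mulB = LinearMap.mul' k Λ ∘ₗ TensorProduct.map ιB ιB)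
    (hιBunit : ιB ∘ₗ unitB = Algebra.linearMap k Λ)
    (hbij : Function.Bijective (LinearMap.mul' k Λ ∘ₗ TensorProduct.map ιA ιB))
    (hcompat : ComulCompat k comulA comulB
      ((LinearEquiv.ofBijective (LinearMap.mul' k Λ ∘ₗ TensorProduct.map ιA ιB)
          hbij).symm.toLinearMap
        ∘ₗ LinearMap.mul' k Λ ∘ₗ TensorProduct.map ιB ιA)) :
    Module.Injective Λ Λ := by
  classical
  have hAm : ∀ a a', ιA (mulA (a ⊗ₜ a')) = ιA a * ιA a' := fun a a' => by
    simpa using congrArg (fun t => t (a ⊗ₜ a')) hιAmul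
  have hBm : ∀ a a', ιB (mulB (a ⊗ₜ a')) = ιB a * ιB a' := fun a a' => by
    simpa using congrArg (fun t => t (a ⊗ₜ a')) hιBmul
  have hA1 : ιA (unitA 1) = 1 := by simpa using congrArg (fun t => t 1) hιAunit
  have hB1 : ιB (unitB 1) = 1 := by simpa using congrArg (fun t => t 1) hιBunit
  set M := LinearEquiv.ofBijective (LinearMap.mul' k Λ ∘ₗ TensorProduct.map ιA ιB) hbij with hM
  have hMa : ∀ z, M z = TTPAux.mm ιA ιB z := fun z => rfl
  set τ : B ⊗[k] A →ₗ[k] A ⊗[k] B :=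
    M.symm.toLinearMap ∘ₗ LinearMap.mul' k Λ ∘ₗ TensorProduct.map ιB ιA with hτ
  have hMτ : ∀ z, TTPAux.mm ιA ιB (τ z) = TTPAux.mm ιB ιA z := fun z => by
    rw [← hMa]; simp [hτ]
  have hτA : ∀ a, τ (unitB 1 ⊗ₜ a) = a ⊗ₜ unitB 1 := fun a => by
    apply M.injective
    rw [hMa, hMa, hMτ]; simp [hB1]
  have hτB : ∀ b, τ (b ⊗ₜ unitA 1) = unitA 1 ⊗ₜ b := fun b => by
    apply M.injective
    rw [hMa, hMa, hMτ]; simp [hA1]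
  have hcomp : ∀ z, TensorProduct.map comulA comulB (τ z)
      = midMap k τ (TensorProduct.map τ τ (midMap k τ (TensorProduct.map comulB comulA z))) :=
    fun z => congrArg (fun t => t z) hcompat
  have hfA := TTPAux.frob_finite hA
  have hfB := TTPAux.frob_finite hB
  have hsurj : Function.Surjective τ := by
    rw [← LinearMap.range_eq_top, eq_top_iff, ← TensorProduct.span_tmul_eq_top, Submodule.span_le]
    rintro _ ⟨a, b, rfl⟩
    have h1 := congrArg (TTPAux.contr (counitA ∘ₗ mulA ∘ₗ TensorProduct.mk k A A a)
      (counitB ∘ₗ mulB ∘ₗ (TensorProduct.mk k B B).flip b)) (hcomp (unitB 1 ⊗ₜ unitA 1))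
    rw [hτA, TTPAux.contr_midMap, TensorProduct.map_tmul, TTPAux.contr, TensorProduct.map_tmul,
      LinearMap.comp_apply, LinearMap.comp_apply, LinearEquiv.coe_coe, LinearEquiv.coe_coe,
      TTPAux.frob_cl' hA, TTPAux.frob_cr' hB] at h1
    exact ⟨_, h1.symm⟩
  have hinj : Function.Injective τ := by
    refine (LinearMap.injective_iff_surjective_of_finrank_eq_finrank ?_).2 hsurj
    rw [Module.finrank_tensorProduct, Module.finrank_tensorProduct, mul_comm]
  let T := LinearEquiv.ofBijective τ ⟨hinj, hsurj⟩
  have hTs : ∀ z, T.symm.toLinearMap (τ z) = z := fun z => T.symm_apply_apply z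
  let D1 : A ⊗[k] B → Λ ⊗[k] Λ := fun z =>
    TensorProduct.map (TTPAux.mm ιA ιB) (TTPAux.mm ιA ιB)
      (midMap k T.symm.toLinearMap (TensorProduct.map comulA comulB z))
  let D2 : B ⊗[k] A → Λ ⊗[k] Λ := fun z =>
    TensorProduct.map (TTPAux.mm ιB ιA) (TTPAux.mm ιB ιA)
      (midMap k τ (TensorProduct.map comulB comulA z))
  have hD : ∀ z, D1 (τ z) = D2 z := by
    intro z
    simp only [D1, D2]
    rw [hcomp, TTPAux.midMap_leftInv _ _ hTs, ← LinearMap.comp_apply, ← TensorProduct.map_comp]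
    have : TTPAux.mm ιA ιB ∘ₗ τ = TTPAux.mm ιB ιA := LinearMap.ext hMτ
    rw [this]
  have hD1 : ∀ a b, D1 (a ⊗ₜ b)
      = TTPAux.lft (ιA a) (TTPAux.rgt (ιB b) (D1 (unitA 1 ⊗ₜ unitB 1))) := by
    intro a b
    simp only [D1, TensorProduct.map_tmul]
    rw [TTPAux.frob_L hA a, TTPAux.frob_R hB b]
    exact TTPAux.legs ιA ιB _ _ _ _ _ (fun c => hAm a c) (fun c => hBm c b) _ _
  have hD2 : ∀ b a, D2 (b ⊗ₜ a)
      = TTPAux.lft (ιB b) (TTPAux.rgt (ιA a) (D2 (unitB 1 ⊗ₜ unitA 1))) := by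
    intro b a
    simp only [D2, TensorProduct.map_tmul]
    rw [TTPAux.frob_L hB b, TTPAux.frob_R hA a]
    exact TTPAux.legs ιB ιA _ _ _ _ _ (fun c => hBm b c) (fun c => hAm c a) _ _
  set e := D2 (unitB 1 ⊗ₜ unitA 1) with he
  have he1 : D1 (unitA 1 ⊗ₜ unitB 1) = e := by rw [← hτA, hD]
  have hl1 : ∀ z : Λ ⊗[k] Λ, TTPAux.lft (1 : Λ) z = z := fun z => by simp [TTPAux.lft]
  have hr1 : ∀ z : Λ ⊗[k] Λ, TTPAux.rgt (1 : Λ) z = z := fun z => by simp [TTPAux.rgt]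
  have hcA : ∀ a, TTPAux.lft (ιA a) e = TTPAux.rgt (ιA a) e := by
    intro a
    have h := hD (unitB 1 ⊗ₜ a)
    rwa [hτA, hD1, hD2, he1, hB1, hr1, hl1] at h
  have hcB : ∀ b, TTPAux.lft (ιB b) e = TTPAux.rgt (ιB b) e := by
    intro b
    have h := hD (b ⊗ₜ unitA 1)
    rw [hτB, hD1, hD2, he1, hA1, hr1, hl1] at h
    exact h.symm
  have hlr : ∀ (x y : Λ) (z : Λ ⊗[k] Λ),
      TTPAux.lft x (TTPAux.rgt y z) = TTPAux.rgt y (TTPAux.lft x z) := by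
    intro x y z
    induction z using TensorProduct.induction_on with
    | zero => simp
    | tmul r s => simp
    | add u v hu hv => simp only [map_add, hu, hv]
  have hc : ∀ x, TTPAux.lft x e = TTPAux.rgt x e := by
    intro x
    obtain ⟨z, rfl⟩ := M.surjective x
    induction z using TensorProduct.induction_on with
    | zero => simp [TTPAux.lft, TTPAux.rgt]
    | tmul a b =>
      have hab : M (a ⊗ₜ b) = ιA a * ιB b := by simp [hMa]
      have h1 : ∀ z : Λ ⊗[k] Λ, TTPAux.lft (ιA a * ιB b) z
          = TTPAux.lft (ιA a) (TTPAux.lft (ιB b) z) := fun z => by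
        simp only [TTPAux.lft, LinearMap.mulLeft_mul]
        rw [← LinearMap.comp_apply, ← TensorProduct.map_comp, LinearMap.id_comp]
      have h2 : ∀ z : Λ ⊗[k] Λ, TTPAux.rgt (ιA a * ιB b) z
          = TTPAux.rgt (ιB b) (TTPAux.rgt (ιA a) z) := fun z => by
        simp only [TTPAux.rgt, LinearMap.mulRight_mul]
        rw [← LinearMap.comp_apply, ← TensorProduct.map_comp, LinearMap.id_comp]
      rw [hab, h1, h2, hcB, hlr, hcA]
    | add u v hu hv =>
      have hL : ∀ (x y : Λ) (z : Λ ⊗[k] Λ),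
          TTPAux.lft (x + y) z = TTPAux.lft x z + TTPAux.lft y z := by
        intro x y z
        induction z using TensorProduct.induction_on with
        | zero => simp
        | tmul r s => simp [add_mul, TensorProduct.add_tmul]
        | add u v hu hv => simp only [map_add, hu, hv]; abel
      have hR : ∀ (x y : Λ) (z : Λ ⊗[k] Λ),
          TTPAux.rgt (x + y) z = TTPAux.rgt x z + TTPAux.rgt y z := by
        intro x y z
        induction z using TensorProduct.induction_on with
        | zero => simp
        | tmul r s => simp [mul_add, TensorProduct.tmul_add]
        | add u v hu hv => simp only [map_add, hu, hv]; abel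
      rw [map_add, hL, hR, hu, hv]
  let N : (B ⊗[k] A) ≃ₗ[k] Λ := T.trans M
  have hN : ∀ z, N z = TTPAux.mm ιB ιA z := fun z => hMτ z
  let ε : B ⊗[k] A →ₗ[k] k := LinearMap.mul' k k ∘ₗ TensorProduct.map counitB counitA
  refine TTPAux.injective_of_casimir e hc (ε ∘ₗ N.symm.toLinearMap) ?_
  have hN' : (ε ∘ₗ N.symm.toLinearMap) ∘ₗ TTPAux.mm ιB ιA = ε := by
    ext b a
    change ε (N.symm (TTPAux.mm ιB ιA (b ⊗ₜ a))) = _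
    rw [← hN, N.symm_apply_apply]
    rfl
  rw [he]
  simp only [D2]
  rw [← LinearMap.comp_apply (TensorProduct.map LinearMap.id _), ← TensorProduct.map_comp, hN',
    LinearMap.id_comp, TensorProduct.map_tmul]
  have h4 : ∀ (s : B ⊗[k] B) (t : A ⊗[k] A),
      TensorProduct.rid k Λ (TensorProduct.map (TTPAux.mm ιB ιA) ε (midMap k τ (s ⊗ₜ t)))
      = TensorProduct.rid k Λ (TensorProduct.map (TTPAux.mm ιB ιA) counitB
        ((TensorProduct.assoc k B A B).symm (TensorProduct.map LinearMap.id τ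
          (TensorProduct.assoc k B B A (s ⊗ₜ
            TensorProduct.rid k A (TensorProduct.map LinearMap.id counitA t)))))) := by
    intro s t
    induction s using TensorProduct.induction_on with
    | zero => simp
    | add u v hu hv => simp only [TensorProduct.add_tmul, map_add, hu, hv]
    | tmul b1 b2 =>
      induction t using TensorProduct.induction_on with
      | zero => simp
      | add u v hu hv => simp only [TensorProduct.tmul_add, map_add, hu, hv]
      | tmul a1 a2 =>
        simp only [TTPAux.midMap_tmul, TensorProduct.map_tmul, LinearMap.id_apply,
          TensorProduct.assoc_tmul, TensorProduct.rid_tmul, TensorProduct.tmul_smul, map_smul]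
        induction τ (b2 ⊗ₜ a1) using TensorProduct.induction_on with
        | zero => simp
        | add u v hu hv => simp only [TensorProduct.tmul_add, map_add, smul_add, hu, hv]
        | tmul p q => simp [ε, smul_smul, mul_comm]
  rw [h4, TTPAux.frob_cr hA]
  have h5 : ∀ s : B ⊗[k] B, TensorProduct.rid k Λ (TensorProduct.map (TTPAux.mm ιB ιA) counitB
        ((TensorProduct.assoc k B A B).symm (TensorProduct.map LinearMap.id τ
          (TensorProduct.assoc k B B A (s ⊗ₜ unitA 1)))))
      = ιB (TensorProduct.rid k B (TensorProduct.map LinearMap.id counitB s)) := by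
    intro s
    induction s using TensorProduct.induction_on with
    | zero => simp
    | add u v hu hv => simp only [TensorProduct.add_tmul, map_add, hu, hv]
    | tmul b1 b2 => simp [hτB, hA1]
  rw [h5, TTPAux.frob_cr hB, hB1]
end
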